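/- arXiv:1011.4492 — 2 statements merged into one kernel-verified Lean document; each statement's English description precedes it below -/
import Mathlib

section
/- Let χ be a non-principal Dirichlet character modulo a prime p ≥ 10^{19}, and let q_1 < q_2 be the two smallest prime non-residues of χ. Then q_2 < 53·p^{1/4}·(log p)². -/
section Polys
open Polynomial

lemma dvd_rootMult (p : ℕ) [Fact p.Prime] (G : (ZMod p)[X]) (hG : G ≠ 0)
    (hd : derivative G = 0) (a : ZMod p) : p ∣ G.rootMultiplicity a := by
  obtain ⟨R, hR, hnd⟩ := G.exists_eq_pow_rootMultiplicity_mul_and_not_dvd hG a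
  set n := G.rootMultiplicity a with hn
  rcases Nat.eq_zero_or_pos n with h0 | h0
  · rw [h0]; exact dvd_zero _
  obtain ⟨k, hk⟩ : ∃ k, n = k + 1 := ⟨n - 1, by omega⟩
  rw [hk] at hR
  have hX : (X - C a) ≠ 0 := X_sub_C_ne_zero a
  have h1 : (X - C a) ^ k * (((k + 1 : ℕ) : (ZMod p)[X]) * R + (X - C a) * derivative R) = 0 := by
    rw [← hd, hR]
    simp [derivative_mul, derivative_pow]
    ring
  have h2 := (mul_eq_zero.mp h1).resolve_left (pow_ne_zero _ hX)
  have h3 := congrArg (eval a) h2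
  have hRa : eval a R ≠ 0 := fun h => hnd (dvd_iff_isRoot.mpr h)
  rw [eval_add, eval_mul, eval_mul, eval_natCast] at h3
  simp only [eval_sub, eval_X, eval_C, sub_self, zero_mul, add_zero, eval_zero] at h3
  have h4 := (mul_eq_zero.mp h3).resolve_right hRa
  rw [hk]
  exact (ZMod.natCast_eq_zero_iff _ _).mp h4

/-- iterates of the connection -/
noncomputable def Qs {K : Type*} [Field K] (T μ P : K[X]) : ℕ → K[X]
  | 0 => P
  | k + 1 => T * derivative (Qs T μ P k) + μ * Qs T μ P k

lemma natDegree_det_le' {K : Type*} [Field K] {r : ℕ} (M : Matrix (Fin r) (Fin r) K[X]) (B : ℕ)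
    (h : ∀ i j, (M i j).natDegree ≤ B) : M.det.natDegree ≤ r * B := by
  rw [Matrix.det_apply]
  refine natDegree_sum_le_of_forall_le _ _ ?_
  intro σ _
  have : (Equiv.Perm.sign σ • ∏ i, M (σ i) i).natDegree ≤ (∏ i, M (σ i) i).natDegree := by
    rcases Int.units_eq_one_or (Equiv.Perm.sign σ) with h | h <;> simp [h, Units.smul_def]
  refine this.trans ((natDegree_prod_le _ _).trans ?_)
  calc ∑ i, (M (σ i) i).natDegree ≤ ∑ i : Fin r, B := Finset.sum_le_sum (fun i _ => h _ _)
    _ = r * B := by simp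

lemma sum_Qs {K : Type*} [Field K] {ι : Type*} [Fintype ι] (T : K[X])
    (μ F P : ι → K[X]) (hTF : ∀ I, T * derivative (F I) = μ I * F I)
    (hsum : ∑ I, P I * F I = 0) (k : ℕ) : ∑ I, Qs T (μ I) (P I) k * F I = 0 := by
  induction k with
  | zero => simpa [Qs] using hsum
  | succ k ih =>
    have := congrArg (fun f => T * derivative f) ih
    simp only [derivative_sum, derivative_mul, derivative_zero, mul_zero, Finset.mul_sum] at this
    rw [← this]
    refine Finset.sum_congr rfl fun I _ => ?_
    simp only [Qs]
    linear_combination (-(Qs T (μ I) (P I) k)) * hTF I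

lemma wronsk {K : Type*} [Field K] {ι : Type*} [Fintype ι] [DecidableEq ι] (T : K[X])
    (μ F P : ι → K[X]) (hTF : ∀ I, T * derivative (F I) = μ I * F I) (hF : ∀ I, F I ≠ 0)
    (hP : P ≠ 0) (hsum : ∑ I, P I * F I = 0) (B : ℕ)
    (hdeg : ∀ I, ∀ k < Fintype.card ι, (Qs T (μ I) (P I) k).natDegree ≤ B) :
    ∃ I J, I ≠ J ∧ ∃ N M : K[X], N ≠ 0 ∧ M ≠ 0 ∧ N.natDegree ≤ Fintype.card ι * B ∧
      M.natDegree ≤ Fintype.card ι * B ∧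
      M * (T * derivative N - μ J * N) = (T * derivative M - μ I * M) * N := by
  classical
  set Q : ι → ℕ → K[X] := fun I k => Qs T (μ I) (P I) k with hQ
  have hQs : ∀ I k, Q I (k+1) = T * derivative (Q I k) + μ I * Q I k := fun I k => rfl
  let mat : (r : ℕ) → (Fin r → ι) → Matrix (Fin r) (Fin r) K[X] :=
    fun r e => Matrix.of fun i j => Q (e j) i
  have hinj : ∀ r e, (mat r e).det ≠ 0 → Function.Injective e := by
    intro r e hd a b hab
    by_contra hne
    exact hd (Matrix.det_zero_of_column_eq hne (fun i => by simp [mat, hab]))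
  have hcard : ∀ r e, (mat r e).det ≠ 0 → r ≤ Fintype.card ι := by
    intro r e hd
    simpa using Fintype.card_le_of_injective e (hinj r e hd)
  let Pr : ℕ → Prop := fun r => ∃ e, (mat r e).det ≠ 0
  have hP1 : Pr 1 := by
    obtain ⟨I, hI⟩ := Function.ne_iff.mp hP
    refine ⟨fun _ => I, ?_⟩
    simpa [mat, hQ, Qs] using hI
  set r := Nat.findGreatest Pr (Fintype.card ι) with hr
  have hc1 : 1 ≤ Fintype.card ι := by obtain ⟨e, he⟩ := hP1; exact hcard 1 e he
  have hPr : Pr r := Nat.findGreatest_spec (P := Pr) hc1 hP1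
  have hr1 : 1 ≤ r := Nat.le_findGreatest (P := Pr) hc1 hP1
  have hnPr : ¬ Pr (r+1) := by
    intro h
    obtain ⟨e, he⟩ := id h
    have := Nat.le_findGreatest (P := Pr) (hcard _ e he) h
    omega
  obtain ⟨e, he⟩ := hPr
  have hrc : r ≤ Fintype.card ι := hcard r e he
  have hei := hinj r e he
  set Bm := mat r e with hBm
  set M := Bm.det with hM
  have hker : ∀ z : Fin r → K[X], Bm.mulVec z = 0 → z = 0 := by
    intro z hz
    by_contra hne
    exact he (Matrix.exists_mulVec_eq_zero_iff.mp ⟨z, hne, hz⟩)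
  have hrow : ∀ z : Fin r → K[X], ∀ i, Bm.mulVec z i = ∑ j, Q (e j) i * z j := by
    intro z i
    simp [Matrix.mulVec, dotProduct, hBm, mat]
  by_contra! hcon
  -- key: columns outside vanish
  have hzero : ∀ I, I ∉ Set.range e → ∀ i : Fin r, Q I i = 0 := by
    intro I hI
    set col : Fin r → K[X] := fun i => Q I i with hcol
    set N : Fin r → K[X] := Matrix.cramer Bm col with hN
    have hBN : ∀ i : Fin r, ∑ j, Q (e j) i * N j = M * Q I i := by
      intro i
      rw [← hrow, hN, Matrix.mulVec_cramer]
      simp [hcol, hM]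
    -- bordered determinant
    have hb : (mat (r+1) (Fin.snoc e I)).det = 0 := by
      by_contra h; exact hnPr ⟨_, h⟩
    obtain ⟨y, hy0, hy⟩ := Matrix.exists_mulVec_eq_zero_iff.mpr hb
    have hyrow : ∀ i : Fin (r+1), ∑ j : Fin r, Q (e j) i * y j.castSucc
        + Q I i * y (Fin.last r) = 0 := by
      intro i
      have := congrFun hy i
      simpa [Matrix.mulVec, dotProduct, mat, Fin.sum_univ_castSucc] using this
    have hyl : y (Fin.last r) ≠ 0 := by
      intro h0
      apply hy0
      have h1 : (fun j : Fin r => y j.castSucc) = 0 := by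
        apply hker
        funext i
        rw [hrow]
        have := hyrow i.castSucc
        simpa [h0] using this
      funext j
      refine Fin.lastCases ?_ ?_ j
      · simpa using h0
      · intro j; exact congrFun h1 j
    have hyN : ∀ j, M * y j.castSucc = - y (Fin.last r) * N j := by
      have h1 : (fun j : Fin r => M * y j.castSucc + y (Fin.last r) * N j) = 0 := by
        apply hker
        funext i
        rw [hrow]
        have e1 := hyrow i.castSucc
        have e2 := hBN i
        simp only [Fin.val_castSucc] at e1
        simp only [mul_add, Finset.sum_add_distrib, Pi.zero_apply]
        have e3 : ∑ j, Q (e j) i * (M * y j.castSucc) = M * ∑ j, Q (e j) i * y j.castSucc := by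
          rw [Finset.mul_sum]; exact Finset.sum_congr rfl fun j _ => by ring
        have e4 : ∑ j, Q (e j) i * (y (Fin.last r) * N j)
            = y (Fin.last r) * ∑ j, Q (e j) i * N j := by
          rw [Finset.mul_sum]; exact Finset.sum_congr rfl fun j _ => by ring
        rw [e3, e4, e2]
        linear_combination M * e1
      intro j
      have := congrFun h1 j
      simp only [Pi.zero_apply] at this
      linear_combination this
    have hBNr : ∑ j, Q (e j) r * N j = M * Q I r := by
      have e1 := hyrow (Fin.last r)
      simp only [Fin.val_last] at e1
      have e2 : y (Fin.last r) * (∑ j, Q (e j) r * N j) = y (Fin.last r) * (M * Q I r) := by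
        have e3 : y (Fin.last r) * (∑ j, Q (e j) r * N j)
            = - (M * ∑ j, Q (e j) r * y j.castSucc) := by
          rw [Finset.mul_sum, Finset.mul_sum, ← Finset.sum_neg_distrib]
          refine Finset.sum_congr rfl fun j _ => ?_
          linear_combination (Q (e j) r) * hyN j
        rw [e3]
        linear_combination (-M) * e1
      exact mul_left_cancel₀ hyl e2
    have hBN' : ∀ i, i ≤ r → ∑ j, Q (e j) i * N j = M * Q I i := by
      intro i hi
      rcases hi.lt_or_eq with h | h
      · exact hBN ⟨i, h⟩
      · rw [h]; exact hBNr
    have hode : ∀ j, M * (T * derivative (N j) - μ (e j) * N j)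
        = (T * derivative M - μ I * M) * N j := by
      have h1 : (fun j : Fin r => M * (T * derivative (N j) - μ (e j) * N j)
        - (T * derivative M - μ I * M) * N j) = 0 := by
        apply hker
        funext i
        rw [hrow]
        have e1 := hBN' i i.2.le
        have e2 := hBN' (i+1) i.2
        have e3 := congrArg (fun f => T * derivative f) e1
        simp only [derivative_sum, derivative_mul, Finset.mul_sum] at e3
        simp only [Pi.zero_apply]
        have e4 : ∑ j, Q (e j) i * (M * (T * derivative (N j) - μ (e j) * N j)
            - (T * derivative M - μ I * M) * N j)
            = M * (∑ j, T * (derivative (Q (e j) i) * N j + Q (e j) i * derivative (N j)))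
              - M * (∑ j, Q (e j) (i+1) * N j)
              - (T * derivative M - μ I * M) * ∑ j, Q (e j) i * N j := by
          rw [Finset.mul_sum, Finset.mul_sum, Finset.mul_sum, ← Finset.sum_sub_distrib,
            ← Finset.sum_sub_distrib]
          refine Finset.sum_congr rfl fun j _ => ?_
          rw [hQs]; ring
        rw [e4, e3, e2, e1, hQs]
        ring
      intro j
      exact sub_eq_zero.mp (congrFun h1 j)
    have hN0 : ∀ j, N j = 0 := by
      intro j
      by_contra hne
      refine hcon I (e j) (fun h => hI ⟨j, h.symm⟩) (N j) M hne he ?_ ?_ (hode j)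
      · rw [hN, Matrix.cramer_apply]
        refine (natDegree_det_le' _ B ?_).trans (Nat.mul_le_mul_right _ hrc)
        intro i k
        rw [Matrix.updateCol_apply]
        split_ifs
        · exact hdeg _ _ (lt_of_lt_of_le i.2 hrc)
        · exact hdeg _ _ (lt_of_lt_of_le i.2 hrc)
      · refine (natDegree_det_le' _ B ?_).trans (Nat.mul_le_mul_right _ hrc)
        intro i k
        exact hdeg _ _ (lt_of_lt_of_le i.2 hrc)
    intro i
    have := hBN i
    simp only [hN0, mul_zero, Finset.sum_const_zero] at this
    exact (mul_eq_zero.mp this.symm).resolve_left he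
  have hfin : (fun j => F (e j)) = 0 := by
    apply hker
    funext i
    rw [hrow]
    have h1 := sum_Qs T μ F P hTF hsum i
    rw [Pi.zero_apply, ← h1]
    have h2 : ∑ j, Q (e j) i * F (e j) = ∑ I ∈ Finset.univ.image e, Q I i * F I := by
      rw [Finset.sum_image (fun a _ b _ h => hei h)]
    rw [h2]
    refine Finset.sum_subset (Finset.subset_univ _) ?_
    intro I _ hI
    have : Q I i = 0 := hzero I (by simpa using hI) i
    rw [this, zero_mul]
  exact hF _ (congrFun hfin ⟨0, hr1⟩)

/-- the products of g-th powers -/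
noncomputable def FF {K : Type*} [Field K] {h : ℕ} (a : Fin h → K) (g : ℕ) (I : Finset (Fin h)) : K[X] :=
  ∏ i ∈ I, (X - C (a i)) ^ g

/-- the common denominator -/
noncomputable def TT {K : Type*} [Field K] {h : ℕ} (a : Fin h → K) : K[X] := ∏ i, (X - C (a i))

/-- logarithmic derivatives times the common denominator -/
noncomputable def MU {K : Type*} [Field K] {h : ℕ} (a : Fin h → K) (g : ℕ) (I : Finset (Fin h)) : K[X] :=
  ∑ i ∈ I, (g : K[X]) * ∏ j ∈ Finset.univ.erase i, (X - C (a j))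

lemma TT_FF {K : Type*} [Field K] {h : ℕ} (a : Fin h → K) (g : ℕ) (hg : 1 ≤ g) (I : Finset (Fin h)) :
    TT a * derivative (FF a g I) = MU a g I * FF a g I := by
  unfold FF MU
  rw [derivative_prod_finset, Finset.mul_sum, Finset.sum_mul]
  refine Finset.sum_congr rfl fun i hi => ?_
  have h1 : TT a = (X - C (a i)) * ∏ j ∈ Finset.univ.erase i, (X - C (a j)) :=
    (Finset.mul_prod_erase _ _ (Finset.mem_univ i)).symm
  rw [h1, ← Finset.mul_prod_erase I (fun i => (X - C (a i)) ^ g) hi, derivative_X_sub_C_pow]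
  obtain ⟨k, rfl⟩ : ∃ k, g = k + 1 := ⟨g - 1, by omega⟩
  simp only [Nat.add_sub_cancel, pow_succ, C_eq_natCast]
  ring

lemma FF_ne {K : Type*} [Field K] {h : ℕ} (a : Fin h → K) (g : ℕ) (I : Finset (Fin h)) :
    FF a g I ≠ 0 :=
  Finset.prod_ne_zero_iff.mpr fun _ _ => pow_ne_zero _ (X_sub_C_ne_zero _)

lemma TT_ne {K : Type*} [Field K] {h : ℕ} (a : Fin h → K) : TT a ≠ 0 :=
  Finset.prod_ne_zero_iff.mpr fun _ _ => X_sub_C_ne_zero _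

lemma TT_deg {K : Type*} [Field K] {h : ℕ} (a : Fin h → K) : (TT a).natDegree ≤ h := by
  unfold TT
  refine (natDegree_prod_le _ _).trans ?_
  simp

lemma FF_deg {K : Type*} [Field K] {h : ℕ} (a : Fin h → K) (g : ℕ) (I : Finset (Fin h)) :
    (FF a g I).natDegree ≤ g * h := by
  unfold FF
  refine (natDegree_prod_le _ _).trans ?_
  have : I.card ≤ h := by simpa using Finset.card_le_univ I
  simp
  nlinarith

lemma MU_deg {K : Type*} [Field K] {h : ℕ} (a : Fin h → K) (g : ℕ) (I : Finset (Fin h)) :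
    (MU a g I).natDegree ≤ h := by
  unfold MU
  refine natDegree_sum_le_of_forall_le _ _ fun i _ => ?_
  refine natDegree_mul_le.trans ?_
  rw [natDegree_natCast, zero_add]
  refine (natDegree_prod_le _ _).trans ?_
  simp

lemma Qs_deg {K : Type*} [Field K] (T μ P : K[X]) (h A : ℕ) (hT : T.natDegree ≤ h)
    (hμ : μ.natDegree ≤ h) (hP : P.natDegree ≤ A) (k : ℕ) : (Qs T μ P k).natDegree ≤ A + k * h := by
  induction k with
  | zero => simpa [Qs] using hP
  | succ k ih =>
    simp only [Qs]
    have := natDegree_derivative_le (Qs T μ P k)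
    refine natDegree_add_le_of_degree_le ?_ ?_
    · refine natDegree_mul_le.trans ?_
      rw [add_mul]; omega
    · refine natDegree_mul_le.trans ?_
      rw [add_mul]; omega

lemma FF_rootMult {K : Type*} [Field K] [DecidableEq K] {h : ℕ} (a : Fin h → K) (ha : Function.Injective a) (g : ℕ)
    (I : Finset (Fin h)) (i : Fin h) :
    (FF a g I).rootMultiplicity (a i) = if i ∈ I then g else 0 := by
  unfold FF
  rw [← count_roots, roots_prod _ _ (FF_ne a g I), Multiset.count_bind]
  simp only [roots_pow, roots_X_sub_C, Multiset.count_nsmul, Multiset.count_singleton, ha.eq_iff]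
  change ∑ j ∈ I, g * (if i = j then 1 else 0) = _
  simp

lemma rootMult_pow {K : Type*} [Field K] (P : K[X]) (n : ℕ) (x : K) :
    (P ^ n).rootMultiplicity x = n * P.rootMultiplicity x := by
  classical
  rw [← count_roots, ← count_roots, roots_pow, Multiset.count_nsmul]

lemma rootMult_le {K : Type*} [Field K] (P : K[X]) (x : K) :
    P.rootMultiplicity x ≤ P.natDegree := by
  classical
  rw [← count_roots]
  exact (Multiset.count_le_card _ _).trans (card_roots' P)

lemma indep (p : ℕ) [Fact p.Prime] (h g A : ℕ) (hg : 2 * g < p) (hg1 : 1 ≤ g) (a : Fin h → ZMod p)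
    (ha : Function.Injective a) (P : Finset (Fin h) → (ZMod p)[X]) (hP : P ≠ 0)
    (hdeg : ∀ I, (P I).natDegree ≤ A) (hA : 2 ^ h * (A + 2 ^ h * h) < g) :
    ∑ I, P I * FF a g I ≠ 0 := by
  intro hsum
  have hcard : Fintype.card (Finset (Fin h)) = 2 ^ h := by simp
  obtain ⟨I, J, hIJ, N, M, hN, hM, hNd, hMd, hode⟩ :=
    wronsk (TT a) (MU a g) (FF a g) P (TT_FF a g hg1) (FF_ne a g) hP hsum (A + 2 ^ h * h) (by
      intro I k hk
      rw [hcard] at hk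
      refine (Qs_deg _ _ _ h A (TT_deg a) (MU_deg a g I) (hdeg I) k).trans ?_
      gcongr)
  rw [hcard] at hNd hMd
  set G := N * FF a g J ^ (p - 1) * M ^ (p - 1) * FF a g I with hG
  have hG0 : G ≠ 0 := by
    simp only [hG]
    exact mul_ne_zero (mul_ne_zero (mul_ne_zero hN (pow_ne_zero _ (FF_ne _ _ _))) (pow_ne_zero _ hM))
      (FF_ne _ _ _)
  have hp2 : 2 ≤ p := (Fact.out : p.Prime).two_le
  have hder : derivative G = 0 := by
    have h1 : TT a * derivative G = 0 := by
      have eI := TT_FF a g hg1 I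
      have eJ := TT_FF a g hg1 J
      obtain ⟨k, hk⟩ : ∃ k, p = k + 2 := ⟨p - 2, by omega⟩
      have hk1 : p - 1 = k + 1 := by omega
      have hc : ((k : (ZMod p)[X]) + 2) = 0 := by
        have : ((p : ℕ) : (ZMod p)[X]) = 0 := by simp
        have h2 : ((p : ℕ) : (ZMod p)[X]) = ((k + 2 : ℕ) : (ZMod p)[X]) := congrArg _ hk
        rw [← this, h2]; push_cast; ring
      rw [hG, hk1]
      simp only [derivative_mul, derivative_pow, Nat.add_sub_cancel, C_eq_natCast]
      push_cast
      have hc' : (k : (ZMod p)[X]) = -2 := by linear_combination hc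
      rw [hc']
      linear_combination (N * FF a g J ^ (k+1) * M ^ (k+1)) * eI
        - (N * FF a g J ^ k * M ^ (k+1) * FF a g I) * eJ
        + (FF a g J ^ (k+1) * M ^ k * FF a g I) * hode
    exact (mul_eq_zero.mp h1).resolve_left (TT_ne a)
  obtain ⟨i, hi⟩ : ∃ i, ¬ (i ∈ I ↔ i ∈ J) := by
    by_contra! hc
    exact hIJ (Finset.ext hc)
  have hdvd := dvd_rootMult p G hG0 hder (a i)
  have hG1 : N * FF a g J ^ (p - 1) * M ^ (p - 1) ≠ 0 := left_ne_zero_of_mul hG0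
  have hG2 : N * FF a g J ^ (p - 1) ≠ 0 := left_ne_zero_of_mul hG1
  rw [hG, rootMultiplicity_mul hG0, rootMultiplicity_mul hG1, rootMultiplicity_mul hG2,
    rootMult_pow, rootMult_pow, FF_rootMult a ha, FF_rootMult a ha] at hdvd
  have hα := rootMult_le N (a i)
  have hβ := rootMult_le M (a i)
  set α := N.rootMultiplicity (a i)
  set β := M.rootMultiplicity (a i)
  have hgen : ∀ eI eJ : ℕ, p ∣ α + (p - 1) * eJ + (p - 1) * β + eI →
      (p : ℤ) ∣ (α : ℤ) - β + eI - eJ := by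
    intro eI eJ hd
    have h1 : (p : ℤ) ∣ ((α + (p - 1) * eJ + (p - 1) * β + eI : ℕ) : ℤ) := by exact_mod_cast hd
    push_cast [Nat.cast_sub (show 1 ≤ p by omega)] at h1
    have h2 : (p : ℤ) ∣ (p : ℤ) * ((eJ : ℤ) + β) := dvd_mul_right _ _
    have h3 := dvd_sub h1 h2
    have e : (α : ℤ) - β + eI - eJ
      = α + (p - 1) * eJ + (p - 1) * β + eI - (p : ℤ) * ((eJ : ℤ) + β) := by ring
    rw [e]; exact h3
  have hdz := hgen _ _ hdvd
  obtain ⟨t, ht⟩ := hdz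
  have hαg : α < g := by omega
  have hβg : β < g := by omega
  have hpz : (2 * g : ℤ) < p := by exact_mod_cast hg
  have : t = 0 := by
    have : |(p:ℤ) * t| < p := by
      rw [← ht, abs_lt]
      split_ifs <;> constructor <;> omega
    rw [abs_mul, abs_of_nonneg (by omega : (0:ℤ) ≤ p)] at this
    by_contra hne
    have h1 : 1 ≤ |t| := Int.one_le_abs hne
    nlinarith
  subst this
  rw [mul_zero] at ht
  by_cases h1 : i ∈ I <;> by_cases h2 : i ∈ J <;> simp [h1, h2] at hi ht <;> omega

lemma Qs_add {K : Type*} [Field K] (T μ P P' : K[X]) (k : ℕ) :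
    Qs T μ (P + P') k = Qs T μ P k + Qs T μ P' k := by
  induction k with
  | zero => rfl
  | succ k ih => simp only [Qs, ih, derivative_add]; ring

lemma Qs_smul {K : Type*} [Field K] (T μ P : K[X]) (c : K) (k : ℕ) :
    Qs T μ (c • P) k = c • Qs T μ P k := by
  induction k with
  | zero => rfl
  | succ k ih =>
    simp only [Qs]
    rw [ih, derivative_smul]
    simp only [smul_eq_C_mul]
    ring

lemma Qs_sum {K : Type*} [Field K] {ι : Type*} [Fintype ι] (T : K[X])
    (μ F P : ι → K[X]) (hTF : ∀ I, T * derivative (F I) = μ I * F I) (k : ℕ) :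
    Qs T 0 (∑ I, P I * F I) k = ∑ I, Qs T (μ I) (P I) k * F I := by
  induction k with
  | zero => rfl
  | succ k ih =>
    rw [Qs, ih, zero_mul, add_zero, derivative_sum, Finset.mul_sum]
    refine Finset.sum_congr rfl fun I _ => ?_
    rw [Qs, derivative_mul]
    linear_combination (Qs T (μ I) (P I) k) * hTF I

lemma mult_of_Qs (p : ℕ) [Fact p.Prime] (T Ψ : (ZMod p)[X]) (hΨ : Ψ ≠ 0) (x : ZMod p)
    (hT : T.eval x ≠ 0) (D : ℕ) (hD : D ≤ p) (h : ∀ k < D, (Qs T 0 Ψ k).eval x = 0) :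
    D ≤ Ψ.rootMultiplicity x := by
  by_contra! hlt
  obtain ⟨R, hR, hnd⟩ := Ψ.exists_eq_pow_rootMultiplicity_mul_and_not_dvd hΨ x
  set n := Ψ.rootMultiplicity x with hn
  have hRa : eval x R ≠ 0 := fun h => hnd (dvd_iff_isRoot.mpr h)
  have key : ∀ k ≤ n, ∃ R' : (ZMod p)[X], R'.eval x ≠ 0 ∧ Qs T 0 Ψ k = (X - C x) ^ (n - k) * R' := by
    intro k
    induction k with
    | zero => intro _; exact ⟨R, hRa, by simpa [Qs] using hR⟩
    | succ k ih =>
      intro hk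
      obtain ⟨R', hR', he⟩ := ih (by omega)
      obtain ⟨j, hj⟩ : ∃ j, n - k = j + 1 := ⟨n - k - 1, by omega⟩
      have hj2 : n - (k+1) = j := by omega
      refine ⟨T * (((j + 1 : ℕ) : (ZMod p)[X]) * R' + (X - C x) * derivative R'), ?_, ?_⟩
      · rw [eval_mul, eval_add, eval_mul, eval_mul, eval_natCast]
        simp only [eval_sub, eval_X, eval_C, sub_self, zero_mul, add_zero]
        refine mul_ne_zero hT (mul_ne_zero ?_ hR')
        intro h0
        have := Nat.le_of_dvd (by omega) ((ZMod.natCast_eq_zero_iff _ _).mp h0)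
        omega
      · rw [Qs, he, hj, hj2]
        simp [derivative_mul, derivative_pow]
        ring
  obtain ⟨R', hR', he⟩ := key n le_rfl
  have := h n hlt
  rw [he] at this
  simp at this
  exact hR' this

theorem stepanov (p : ℕ) [Fact p.Prime] (h g D : ℕ) (hh : 1 ≤ h) (hD : 2 ^ h = 4 * D) (hg : 2 * g < p)
    (hcond : 2 * h * 4 ^ h ≤ g) (a : Fin h → ZMod p) (ha : Function.Injective a) (c : ZMod p)
    (hc : c ≠ 0) (S : Finset (ZMod p)) (hS : ∀ x ∈ S, ∀ i, (x - a i) ^ g = c) :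
    D * S.card ≤ h * D + g * h := by
  classical
  have hD1 : 1 ≤ D := by
    rcases Nat.eq_zero_or_pos D with h0 | h0
    · simp [h0] at hD
    · exact h0
  have h4 : 4 ^ h = 16 * D ^ 2 := by
    rw [show (4:ℕ) = 2 ^ 2 by norm_num, ← pow_mul, mul_comm, pow_mul, hD]; ring
  rw [h4] at hcond
  set A := h * D with hA
  have hA1 : 1 ≤ A := Nat.one_le_iff_ne_zero.mpr (by positivity)
  have hg1 : 1 ≤ g := by nlinarith
  let pol : (Fin A → ZMod p) →ₗ[ZMod p] (ZMod p)[X] :=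
    ∑ i : Fin A, (monomial (i : ℕ)).comp (LinearMap.proj i)
  have hpol : ∀ w, pol w = ∑ i : Fin A, monomial (i : ℕ) (w i) := by
    intro w; simp [pol]
  have hpoldeg : ∀ w, (pol w).natDegree ≤ A - 1 := by
    intro w
    rw [hpol]
    refine natDegree_sum_le_of_forall_le _ _ fun i _ => ?_
    refine (natDegree_monomial_le _).trans ?_
    have := i.2
    omega
  have hpolinj : ∀ w, pol w = 0 → w = 0 := by
    intro w hw
    funext i
    have := congrArg (fun f => coeff f (i : ℕ)) hw
    simp only [hpol, finsetSum_coeff, coeff_monomial, coeff_zero, Fin.val_inj] at this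
    simpa using this
  let E : (Finset (Fin h) → Fin A → ZMod p) → ℕ → (ZMod p)[X] := fun v k =>
    ∑ I, C (c ^ I.card) * Qs (TT a) (MU a g I) (pol (v I)) k
  let φ : (Finset (Fin h) → Fin A → ZMod p) →ₗ[ZMod p] (Fin D → Fin (A + D * h) → ZMod p) :=
    { toFun := fun v k n => (E v k).coeff n
      map_add' := by
        intro v w
        funext k n
        simp only [E, Pi.add_apply, map_add, Qs_add, mul_add, Finset.sum_add_distrib, coeff_add]
      map_smul' := by
        intro r v
        funext k n
        simp only [E, Pi.smul_apply, map_smul, Qs_smul, RingHom.id_apply]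
        rw [← coeff_smul, Finset.smul_sum]
        congr 1
        refine Finset.sum_congr rfl fun I _ => ?_
        rw [mul_smul_comm] }
  have hker : LinearMap.ker φ ≠ ⊥ := by
    apply LinearMap.ker_ne_bot_of_finrank_lt
    simp only [Module.finrank_pi, Module.finrank_pi_fintype, Module.finrank_self, Finset.sum_const,
      Finset.card_univ, Fintype.card_fin, Fintype.card_finset, smul_eq_mul, mul_one]
    rw [hD, hA]
    have : 0 < h * D * D := by positivity
    nlinarith
  obtain ⟨v, hv, hv0⟩ := (Submodule.ne_bot_iff _).mp hker
  have hEdeg : ∀ k < D, (E v k).natDegree < A + D * h := by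
    intro k hk
    have : (E v k).natDegree ≤ (A - 1) + k * h := by
      refine natDegree_sum_le_of_forall_le _ _ fun I _ => ?_
      refine (natDegree_C_mul_le _ _).trans ?_
      exact Qs_deg _ _ _ h (A - 1) (TT_deg a) (MU_deg a g I) (hpoldeg _) k
    have : k * h ≤ D * h := Nat.mul_le_mul_right _ hk.le
    omega
  have hE0 : ∀ k < D, E v k = 0 := by
    intro k hk
    ext n
    rw [coeff_zero]
    by_cases hn : n < A + D * h
    · have := congrFun (congrFun (LinearMap.mem_ker.mp hv) ⟨k, hk⟩) ⟨n, hn⟩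
      exact this
    · exact coeff_eq_zero_of_natDegree_lt (lt_of_lt_of_le (hEdeg k hk) (not_lt.mp hn))
  set P : Finset (Fin h) → (ZMod p)[X] := fun I => pol (v I) with hP
  have hP0 : P ≠ 0 := by
    intro h0
    apply hv0
    funext I
    exact hpolinj _ (congrFun h0 I)
  set Ψ := ∑ I, P I * FF a g I with hΨ
  have hΨ0 : Ψ ≠ 0 := by
    apply indep p h g (A - 1) hg hg1 a ha P hP0 (fun I => hpoldeg _)
    rw [hD]
    have : A - 1 + 4 * D * h ≤ 5 * h * D := by
      have : 4 * D * h = 4 * (h * D) := by ring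
      have : 5 * h * D = 5 * (h * D) := by ring
      omega
    calc 4 * D * (A - 1 + 4 * D * h) ≤ 4 * D * (5 * h * D) := Nat.mul_le_mul_left _ this
      _ < 2 * h * (16 * D ^ 2) := by
        have : 0 < h * D * D := by positivity
        nlinarith
      _ ≤ g := hcond
  have hDp : D ≤ p := by nlinarith
  have hmult : ∀ x ∈ S, D ≤ Ψ.rootMultiplicity x := by
    intro x hx
    have hne : ∀ i, x - a i ≠ 0 := by
      intro i h0
      have := hS x hx i
      rw [h0, zero_pow (by omega)] at this
      exact hc this.symm
    apply mult_of_Qs p (TT a) Ψ hΨ0 x ?_ D hDp ?_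
    · simp only [TT, eval_prod, eval_sub, eval_X, eval_C]
      exact Finset.prod_ne_zero_iff.mpr fun i _ => hne i
    · intro k hk
      rw [hΨ, Qs_sum (TT a) (MU a g) (FF a g) P (TT_FF a g hg1)]
      have h1 := congrArg (eval x) (hE0 k hk)
      simp only [E, eval_finsetSum, eval_mul, eval_C, eval_zero] at h1
      rw [eval_finsetSum, ← h1]
      refine Finset.sum_congr rfl fun I _ => ?_
      have : eval x (FF a g I) = c ^ I.card := by
        simp only [FF, eval_prod, eval_pow, eval_sub, eval_X, eval_C]
        rw [Finset.prod_congr rfl (fun i _ => hS x hx i), Finset.prod_const]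
      rw [eval_mul, this, mul_comm]
  have hdegΨ : Ψ.natDegree ≤ h * D + g * h := by
    refine natDegree_sum_le_of_forall_le _ _ fun I _ => ?_
    refine natDegree_mul_le.trans ?_
    have := hpoldeg (v I)
    have := FF_deg a g I
    simp only [hP]
    omega
  calc D * S.card = ∑ x ∈ S, D := by simp [mul_comm]
    _ ≤ ∑ x ∈ S, Ψ.roots.count x := by
      refine Finset.sum_le_sum fun x hx => ?_
      rw [count_roots]; exact hmult x hx
    _ ≤ Multiset.card Ψ.roots := by
      rw [← Multiset.toFinset_sum_count_eq Ψ.roots]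
      refine Finset.sum_le_sum_of_ne_zero fun x _ hx => ?_
      rw [Multiset.mem_toFinset]
      exact Multiset.count_ne_zero.mp hx
    _ ≤ Ψ.natDegree := card_roots' _
    _ ≤ _ := hdegΨ

end Polys


lemma odd_mult_card (Y d : ℕ) (hd : 1 ≤ d) :
    (((Finset.Ioc Y (2*Y)).filter (fun q => q % 2 = 1 ∧ d ∣ q)).card : ℝ) ≤ Y / (2*d) + 1 := by
  have hsub : ((Finset.Ioc Y (2*Y)).filter (fun q => q % 2 = 1 ∧ d ∣ q)) ⊆
      (Finset.Ioc Y (2*Y)).filter (fun q => q ≡ d [MOD (2*d)]) := by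
    intro q hq
    rw [Finset.mem_filter] at hq ⊢
    refine ⟨hq.1, ?_⟩
    obtain ⟨k, hk⟩ := hq.2.2
    have hk1 : k % 2 = 1 := by
      rcases Nat.mod_two_eq_zero_or_one k with h | h
      · have h1 := hq.2.1
        rw [hk, Nat.mul_mod, h] at h1
        simp at h1
      · exact h
    rw [hk, show k = 2 * (k/2) + 1 by omega]
    have : d * (2 * (k/2) + 1) = d + 2 * d * (k/2) := by ring
    rw [this]
    simp [Nat.ModEq]
  have h1 : (((Finset.Ioc Y (2*Y)).filter (fun q => q % 2 = 1 ∧ d ∣ q)).card : ℤ) ≤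
      max (⌊(((2*Y : ℕ) : ℚ) - d) / ((2*d : ℕ):ℚ)⌋ - ⌊((Y : ℚ) - d) / ((2*d : ℕ):ℚ)⌋) 0 := by
    rw [← Nat.Ioc_filter_modEq_card Y (2*Y) (by omega : 0 < 2*d) d]
    exact_mod_cast Finset.card_le_card hsub
  have hd' : (0:ℚ) < d := by exact_mod_cast hd
  have h2 : (((max (⌊(((2*Y : ℕ) : ℚ) - d) / ((2*d : ℕ):ℚ)⌋ - ⌊((Y : ℚ) - d) / ((2*d : ℕ):ℚ)⌋) 0 : ℤ)) : ℚ)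
      ≤ Y / (2*d) + 1 := by
    push_cast
    refine max_le ?_ (by positivity)
    have a1 := Int.floor_le ((2 * (Y:ℚ) - d) / (2*d))
    have a2 := (Int.lt_floor_add_one (((Y:ℚ) - d) / (2*d))).le
    have a3 : (2 * (Y:ℚ) - d) / (2*d) = ((Y:ℚ) - d) / (2*d) + Y / (2*d) := by
      field_simp; ring
    linarith
  have h3 : (((Finset.Ioc Y (2*Y)).filter (fun q => q % 2 = 1 ∧ d ∣ q)).card : ℚ) ≤ Y / (2*d) + 1 := by
    refine le_trans ?_ h2
    exact_mod_cast h1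
  have := (Rat.cast_le (K := ℝ)).mpr h3
  push_cast at this
  exact this

lemma odd_card (Y : ℕ) :
    (Y : ℝ) / 2 - 1 ≤ ((Finset.Ioc Y (2*Y)).filter (fun q => q % 2 = 1)).card := by
  have hmap : (Finset.Ico ((Y+1)/2) Y).card ≤ ((Finset.Ioc Y (2*Y)).filter (fun q => q % 2 = 1)).card := by
    apply Finset.card_le_card_of_injOn (fun k => 2*k+1)
    · intro k hk
      simp only [Finset.coe_Ico, Set.mem_Ico] at hk
      simp only [Finset.coe_filter, Finset.mem_Ioc, Set.mem_setOf_eq]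
      omega
    · intro a _ b _ hab
      simp only at hab
      omega
  rw [Nat.card_Ico] at hmap
  have : Y ≤ 2 * ((Finset.Ioc Y (2*Y)).filter (fun q => q % 2 = 1)).card + 1 := by omega
  have : (Y:ℝ) ≤ 2 * ((Finset.Ioc Y (2*Y)).filter (fun q => q % 2 = 1)).card + 1 := by exact_mod_cast this
  linarith

/-- admissible pairs -/
def pairsSet (Y u : ℕ) : Finset (ℕ × ℕ) :=
  ((Finset.Ioc Y (2*Y)) ×ˢ (Finset.Ioc 0 Y)).filter
    (fun x => x.1 % 2 = 1 ∧ ¬ u ∣ x.1 ∧ Nat.Coprime x.1 x.2)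

lemma sum_sq_le (n : ℕ) : ∑ k ∈ Finset.range n, (1:ℝ) / (2 * ((k:ℝ) + 1) + 1) ^ 2 ≤ 1/4 - 1 / (4 * ((n:ℝ)+1)) := by
  induction n with
  | zero => norm_num
  | succ n ih =>
    rw [Finset.sum_range_succ]
    have : (1:ℝ) / (2 * ((n:ℝ) + 1) + 1) ^ 2 ≤ 1 / (4 * ((n:ℝ)+1)) - 1 / (4 * (((n:ℝ)+1)+1)) := by
      rw [div_sub_div _ _ (by positivity) (by positivity), div_le_div_iff₀ (by positivity) (by positivity)]
      nlinarith [(Nat.cast_nonneg n : (0:ℝ) ≤ n)]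
    push_cast
    linarith

lemma pairs_card (Y u : ℕ) (hu : u.Prime) (hY : 100 ≤ Y) :
    (Y:ℝ)^2 / 8 ≤ (pairsSet Y u).card := by
  classical
  set Q0 := (Finset.Ioc Y (2*Y)).filter (fun q => q % 2 = 1) with hQ0
  set Qu := (Finset.Ioc Y (2*Y)).filter (fun q => q % 2 = 1 ∧ u ∣ q) with hQu
  set Q1 := (Finset.Ioc Y (2*Y)).filter (fun q => q % 2 = 1 ∧ ¬ u ∣ q) with hQ1
  have hYr : (100:ℝ) ≤ Y := by exact_mod_cast hY
  have hsplit : Q0.card = Qu.card + Q1.card := by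
    rw [hQu, hQ1, ← Finset.filter_filter, ← Finset.filter_filter, ← hQ0,
      Finset.card_filter_add_card_filter_not]
  have hQuc : (Qu.card : ℝ) ≤ Y / 6 + 1 := by
    rcases hu.two_le.lt_or_eq with h | h
    · refine (odd_mult_card Y u (by omega)).trans ?_
      have hu3 : (3:ℝ) ≤ u := by exact_mod_cast h
      have : (Y:ℝ) / (2*u) ≤ Y / 6 := by
        apply div_le_div_of_nonneg_left <;> linarith
      linarith
    · have : Qu = ∅ := by
        rw [hQu, Finset.filter_eq_empty_iff]
        rintro q _ ⟨h1, h2⟩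
        rw [← h] at h2
        omega
      rw [this]; simp; positivity
  have hQ1c : (Y:ℝ)/3 - 2 ≤ Q1.card := by
    have h1 := odd_card Y
    rw [← hQ0] at h1
    have h2 : (Q0.card : ℝ) = Qu.card + Q1.card := by exact_mod_cast hsplit
    linarith
  -- cover
  have hcov : Q1 ×ˢ (Finset.Ioc 0 Y) ⊆ pairsSet Y u ∪ (Finset.range Y).biUnion (fun k =>
      ((Finset.Ioc Y (2*Y)).filter (fun q => q % 2 = 1 ∧ (2*(k+1)+1) ∣ q)) ×ˢ
        ((Finset.Ioc 0 Y).filter (fun t => (2*(k+1)+1) ∣ t))) := by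
    rintro ⟨q, t⟩ hx
    simp only [hQ1, Finset.mem_product, Finset.mem_filter, Finset.mem_Ioc] at hx
    rw [Finset.mem_union]
    by_cases hc : Nat.Coprime q t
    · left
      simp only [pairsSet, Finset.mem_filter, Finset.mem_product, Finset.mem_Ioc]
      exact ⟨⟨hx.1.1, hx.2⟩, hx.1.2.1, hx.1.2.2, hc⟩
    · right
      have hdq := Nat.gcd_dvd_left q t
      have hdt := Nat.gcd_dvd_right q t
      have hd0 : 0 < Nat.gcd q t := Nat.gcd_pos_of_pos_left _ (by omega)
      have hle := Nat.le_of_dvd hx.2.1 hdt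
      have hne : Nat.gcd q t ≠ 1 := hc
      set d := Nat.gcd q t
      have hodd : d % 2 = 1 := by
        rcases Nat.mod_two_eq_zero_or_one d with h | h
        · have : 2 ∣ q := (Nat.dvd_of_mod_eq_zero h).trans hdq
          omega
        · exact h
      simp only [Finset.mem_biUnion, Finset.mem_range, Finset.mem_product, Finset.mem_filter, Finset.mem_Ioc]
      refine ⟨(d-3)/2, by omega, ?_⟩
      have : 2 * ((d-3)/2 + 1) + 1 = d := by omega
      rw [this]
      exact ⟨⟨hx.1.1, hx.1.2.1, hdq⟩, hx.2, hdt⟩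
  have hcard := (Finset.card_le_card hcov).trans ((Finset.card_union_le _ _).trans
    (Nat.add_le_add_left Finset.card_biUnion_le _))
  rw [Finset.card_product] at hcard
  have hcardR : (Q1.card : ℝ) * Y ≤ (pairsSet Y u).card + ∑ k ∈ Finset.range Y,
      (((((Finset.Ioc Y (2*Y)).filter (fun q => q % 2 = 1 ∧ (2*(k+1)+1) ∣ q)) ×ˢ
        ((Finset.Ioc 0 Y).filter (fun t => (2*(k+1)+1) ∣ t))).card : ℕ) : ℝ) := by
    have : (Finset.Ioc 0 Y).card = Y := by simp
    rw [this] at hcard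
    exact_mod_cast hcard
  have hterm : ∀ k ∈ Finset.range Y, (((((Finset.Ioc Y (2*Y)).filter (fun q => q % 2 = 1 ∧ (2*(k+1)+1) ∣ q)) ×ˢ
        ((Finset.Ioc 0 Y).filter (fun t => (2*(k+1)+1) ∣ t))).card : ℕ) : ℝ) ≤
        (0.6 * (Y:ℝ)^2) * (1 / (2 * ((k:ℝ) + 1) + 1) ^ 2) + 2.5 := by
    intro k _
    rw [Finset.card_product, Nat.Ioc_filter_dvd_card_eq_div]
    have h1 := odd_mult_card Y (2*(k+1)+1) (by omega)
    have h2 : ((Y / (2*(k+1)+1) : ℕ) : ℝ) ≤ (Y:ℝ) / ((2*(k+1)+1 : ℕ):ℝ) := Nat.cast_div_le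
    push_cast at h1 h2 ⊢
    have hd0 : (0:ℝ) < 2 * ((k:ℝ)+1)+1 := by positivity
    set d := 2 * ((k:ℝ)+1)+1
    set w := (Y:ℝ) / d with hw
    have e1 : (Y:ℝ) / (2*d) = w / 2 := by rw [hw]; field_simp
    have e2 : (0.6 * (Y:ℝ)^2) * (1 / d^2) = 0.6 * w^2 := by rw [hw]; field_simp
    rw [e1] at h1
    rw [e2]
    have hw0 : 0 ≤ w := by positivity
    calc _ ≤ (w/2 + 1) * w := mul_le_mul h1 h2 (by positivity) (by positivity)
      _ ≤ _ := by nlinarith [sq_nonneg (w - 5)]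
  have hs := Finset.sum_le_sum hterm
  rw [Finset.sum_add_distrib, ← Finset.mul_sum, Finset.sum_const, Finset.card_range, nsmul_eq_mul] at hs
  have hq := sum_sq_le Y
  have hq' : ∑ k ∈ Finset.range Y, (1:ℝ) / (2 * ((k:ℝ) + 1) + 1) ^ 2 ≤ 1/4 := by
    have : (0:ℝ) ≤ 1 / (4 * ((Y:ℝ)+1)) := by positivity
    linarith
  have h6 : (0.6 * (Y:ℝ)^2) * ∑ k ∈ Finset.range Y, (1:ℝ) / (2 * ((k:ℝ) + 1) + 1) ^ 2
      ≤ (0.6 * (Y:ℝ)^2) * (1/4) := mul_le_mul_of_nonneg_left hq' (by positivity)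
  have h7 : ((Y:ℝ)/3 - 2) * Y ≤ Q1.card * Y := mul_le_mul_of_nonneg_right hQ1c (by positivity)
  nlinarith

lemma class_card (u q k a L : ℕ) (b : ℤ) (hu : u.Prime) (hq : ¬ u ∣ q) (hL : L ≤ u * k) :
    ((Finset.Ioc a (a+L)).filter (fun z : ℕ => (u:ℤ) ∣ (q:ℤ) * z - b)).card ≤ k := by
  have : (Finset.range k).card = k := by simp
  rw [← this]
  apply Finset.card_le_card_of_injOn (fun z => (z - a - 1) / u)
  · intro z hz
    simp only [Finset.coe_filter, Finset.mem_Ioc, Set.mem_setOf_eq] at hz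
    simp only [Finset.coe_range, Set.mem_Iio]
    rw [Nat.div_lt_iff_lt_mul hu.pos, mul_comm]
    omega
  · intro z hz w hw hzw
    simp only [Finset.coe_filter, Finset.mem_Ioc, Set.mem_setOf_eq] at hz hw
    simp only at hzw
    have hd : (u:ℤ) ∣ (q:ℤ) * ((z:ℤ) - w) := by
      have := dvd_sub hz.2 hw.2
      have e : (q:ℤ) * ((z:ℤ) - w) = (q:ℤ) * z - b - ((q:ℤ) * w - b) := by ring
      rw [e]; exact this
    have hpz : Prime (u:ℤ) := Nat.prime_iff_prime_int.mp hu
    have hd2 : (u:ℤ) ∣ (z:ℤ) - w := (hpz.dvd_or_dvd hd).resolve_left (by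
      intro h; exact hq (by exact_mod_cast h))
    have e1 := Nat.div_add_mod (z - a - 1) u
    have e2 := Nat.div_add_mod (w - a - 1) u
    have l1 := Nat.mod_lt (z - a - 1) hu.pos
    have l2 := Nat.mod_lt (w - a - 1) hu.pos
    rw [hzw] at e1
    obtain ⟨m, hm⟩ := hd2
    have hm0 : m = 0 := by
      by_contra hne
      have h1 : 1 ≤ |m| := Int.one_le_abs hne
      have h2 : |(z:ℤ) - w| < u := by
        rw [abs_lt]; constructor <;> omega
      rw [hm, abs_mul, abs_of_nonneg (by omega : (0:ℤ) ≤ u)] at h2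
      nlinarith
    rw [hm0] at hm
    omega

/-- the good starting points -/
def goodZ (p u s h q t : ℕ) : Finset ℕ :=
  (Finset.Ioc (t*p/q) (t*p/q + 2*(s*h))).filter
    (fun z => ∀ i < h, ¬ (u:ℤ) ∣ (q:ℤ) * ((z:ℤ) + s * (i+1)) - t * p)

lemma goodZ_card (p u s h q t : ℕ) (hu : u.Prime) (hq : ¬ u ∣ q)
    (hs : s = u ∨ (s = 1 ∧ 2 * h < u)) : s * h ≤ (goodZ p u s h q t).card := by
  classical
  set a := t*p/q with ha
  have hsplit : ((Finset.Ioc a (a + 2*(s*h)))).card = (goodZ p u s h q t).card +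
      ((Finset.Ioc a (a + 2*(s*h))).filter
        (fun z : ℕ => ¬ ∀ i < h, ¬ (u:ℤ) ∣ (q:ℤ) * ((z:ℤ) + s * (i+1)) - t * p)).card := by
    rw [goodZ, Finset.card_filter_add_card_filter_not]
  rw [Nat.card_Ioc] at hsplit
  suffices hb : ((Finset.Ioc a (a + 2*(s*h))).filter
        (fun z : ℕ => ¬ ∀ i < h, ¬ (u:ℤ) ∣ (q:ℤ) * ((z:ℤ) + s * (i+1)) - t * p)).card ≤ s * h by omega
  rcases hs with hs | ⟨hs, hlt⟩
  · subst hs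
    have h1 := class_card s q (2*h) a (2*(s*h)) ((t:ℤ)*p) hu hq (by nlinarith)
    refine (Finset.card_le_card ?_).trans (h1.trans (Nat.mul_le_mul_right _ hu.two_le))
    intro z hz
    rw [Finset.mem_filter] at hz ⊢
    refine ⟨hz.1, ?_⟩
    have h2 := hz.2
    push Not at h2
    obtain ⟨i, _, hi⟩ := h2
    have h3 : (s:ℤ) ∣ (s:ℤ) * (q * (i+1)) := dvd_mul_right _ _
    have := dvd_sub hi h3
    have e : (q:ℤ) * z - (t:ℤ) * p
        = (q:ℤ) * ((z:ℤ) + s * (i+1)) - t * p - (s:ℤ) * (q * (i+1)) := by ring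
    rw [e]; exact this
  · subst hs
    rw [one_mul]
    have hsub : ((Finset.Ioc a (a + 2*h)).filter
        (fun z : ℕ => ¬ ∀ i < h, ¬ (u:ℤ) ∣ (q:ℤ) * ((z:ℤ) + (1:ℕ) * (i+1)) - t * p)) ⊆
        (Finset.range h).biUnion (fun i => (Finset.Ioc a (a+2*h)).filter
          (fun z : ℕ => (u:ℤ) ∣ (q:ℤ) * z - (t * p - q * (i+1)))) := by
      intro z hz
      rw [Finset.mem_filter] at hz
      have h2 := hz.2
      push Not at h2
      obtain ⟨i, hi, hd⟩ := h2
      rw [Finset.mem_biUnion]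
      refine ⟨i, Finset.mem_range.mpr hi, Finset.mem_filter.mpr ⟨hz.1, ?_⟩⟩
      convert hd using 1
      push_cast; ring
    refine (Finset.card_le_card hsub).trans (Finset.card_biUnion_le.trans ?_)
    calc _ ≤ ∑ i ∈ Finset.range h, 1 := by
          refine Finset.sum_le_sum fun i _ => ?_
          exact class_card u q 1 a (2*h) _ hu hq (by omega)
      _ = h := by simp

lemma lower (p : ℕ) [Fact p.Prime] (χ : DirichletCharacter ℂ p) (u H h s Y : ℕ) (hu : u.Prime)
    (hgood : ∀ n : ℕ, 0 < n → n ≤ H → ¬ u ∣ n → χ (n : ZMod p) = 1)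
    (hs : s = u ∨ (s = 1 ∧ 2 * h < u)) (hs0 : 1 ≤ s) (hh : 1 ≤ h) (hsp : s < p)
    (hYH : 2 * Y * (3 * (s * h)) ≤ H) (hHY : H * (2 * Y) < p) (hHp : H < p) (S : Finset (ZMod p))
    (hS : ∀ x : ZMod p, (∀ i : Fin h, χ (x + ((i:ℕ) + 1 : ℕ)) = (χ (s : ZMod p))⁻¹) → x ∈ S) :
    s * h * (pairsSet Y u).card ≤ S.card := by
  classical
  have hp0 : 0 < p := (Fact.out : p.Prime).pos
  have hsh : 1 ≤ s * h := Nat.mul_pos hs0 hh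
  have hmem : ∀ x ∈ pairsSet Y u, Y < x.1 ∧ x.1 ≤ 2 * Y ∧ 0 < x.2 ∧ x.2 ≤ Y ∧ ¬ u ∣ x.1 ∧
      Nat.Coprime x.1 x.2 := by
    intro x hx
    simp only [pairsSet, Finset.mem_filter, Finset.mem_product, Finset.mem_Ioc] at hx
    tauto
  have hbd : ∀ x ∈ pairsSet Y u, ∀ z ∈ goodZ p u s h x.1 x.2, x.2 * p < x.1 * z ∧
      x.1 * (z + s * h) ≤ x.2 * p + H ∧ z < p := by
    intro x hx z hz
    obtain ⟨h1, h2, h3, h4, h5, h6⟩ := hmem x hx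
    simp only [goodZ, Finset.mem_filter, Finset.mem_Ioc] at hz
    obtain ⟨⟨hz1, hz2⟩, -⟩ := hz
    have hx0 : 0 < x.1 := by omega
    have b1 : x.2 * p < x.1 * z := by
      rw [Nat.div_lt_iff_lt_mul hx0] at hz1
      linarith [mul_comm z x.1]
    have b2 : x.1 * (z + s * h) ≤ x.2 * p + H := by
      have e1 : x.1 * (x.2 * p / x.1) ≤ x.2 * p := Nat.mul_div_le _ _
      have e2 : x.1 * (3 * (s*h)) ≤ 2 * Y * (3 * (s*h)) := Nat.mul_le_mul_right _ h2
      have e3 : x.1 * (z + s * h) ≤ x.1 * (x.2 * p / x.1 + 3 * (s * h)) :=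
        Nat.mul_le_mul_left _ (by omega)
      rw [mul_add x.1 (x.2 * p / x.1)] at e3
      omega
    refine ⟨b1, b2, ?_⟩
    by_contra hzp
    push Not at hzp
    have e1 : x.1 * (p + 0) ≤ x.1 * (z + s * h) := Nat.mul_le_mul_left _ (by omega)
    have e2 : (x.2 + 1) * p ≤ x.1 * p := Nat.mul_le_mul_right _ (by omega)
    rw [add_mul] at e2
    rw [add_zero] at e1
    omega
  have hcard : s * h * (pairsSet Y u).card ≤
      ((pairsSet Y u).sigma (fun x => goodZ p u s h x.1 x.2)).card := by
    rw [Finset.card_sigma]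
    calc s * h * (pairsSet Y u).card = ∑ x ∈ pairsSet Y u, s * h := by
          rw [Finset.sum_const, smul_eq_mul, mul_comm]
      _ ≤ _ := Finset.sum_le_sum fun x hx => goodZ_card p u s h x.1 x.2 hu (hmem x hx).2.2.2.2.1 hs
  refine hcard.trans ?_
  have hs0' : (s : ZMod p) ≠ 0 := by
    intro h0
    have := Nat.le_of_dvd hs0 ((ZMod.natCast_eq_zero_iff _ _).mp h0)
    omega
  apply Finset.card_le_card_of_injOn (fun y => (y.2 : ZMod p) * (s : ZMod p)⁻¹)
  · rintro ⟨x, z⟩ hy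
    simp only [Finset.coe_sigma, Set.mem_sigma_iff, Finset.mem_coe] at hy
    obtain ⟨hx, hz⟩ := hy
    obtain ⟨b1, b2, b3⟩ := hbd x hx z hz
    obtain ⟨h1, h2, h3, h4, h5, h6⟩ := hmem x hx
    apply hS
    intro i
    have hqχ : χ (x.1 : ZMod p) = 1 := by
      apply hgood x.1 (by omega) ?_ h5
      nlinarith
    have hi : (i:ℕ) + 1 ≤ h := i.2
    set n := x.1 * (z + s * (i + 1)) - x.2 * p with hn
    have c1 : x.1 * z ≤ x.1 * (z + s * (i + 1)) := Nat.mul_le_mul_left _ (by omega)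
    have c2 : x.1 * (z + s * (i + 1)) ≤ x.1 * (z + s * h) := by gcongr
    have hnχ : χ (n : ZMod p) = 1 := by
      apply hgood n (by omega) (by omega)
      simp only [goodZ, Finset.mem_filter] at hz
      intro hd
      apply hz.2 i i.2
      have : ((n:ℕ):ℤ) = (x.1:ℤ) * ((z:ℤ) + s * (((i:ℕ):ℤ)+1)) - x.2 * p := by
        rw [hn, Nat.cast_sub (by omega)]; push_cast; ring
      rw [← this]
      exact_mod_cast hd
    have hncast : (n : ZMod p) = (x.1 : ZMod p) * ((z : ZMod p) + s * (((i:ℕ) + 1 : ℕ) : ZMod p)) := by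
      rw [hn, Nat.cast_sub (by omega)]; push_cast; simp
    rw [hncast, map_mul, hqχ, one_mul] at hnχ
    have e : (z : ZMod p) + s * (((i:ℕ) + 1 : ℕ) : ZMod p)
        = s * ((z : ZMod p) * (s : ZMod p)⁻¹ + (((i:ℕ) + 1 : ℕ) : ZMod p)) := by
      field_simp
    rw [e, map_mul] at hnχ
    exact eq_inv_of_mul_eq_one_right hnχ
  · rintro ⟨x, z⟩ hy ⟨x', z'⟩ hy' heq
    simp only [Finset.coe_sigma, Set.mem_sigma_iff, Finset.mem_coe] at hy hy'
    obtain ⟨hx, hz⟩ := hy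
    obtain ⟨hx', hz'⟩ := hy'
    obtain ⟨b1, b2, b3⟩ := hbd x hx z hz
    obtain ⟨b1', b2', b3'⟩ := hbd x' hx' z' hz'
    obtain ⟨h1, h2, h3, h4, h5, h6⟩ := hmem x hx
    obtain ⟨h1', h2', h3', h4', h5', h6'⟩ := hmem x' hx'
    simp only at heq
    have hzz : (z : ZMod p) = z' := mul_right_cancel₀ (inv_ne_zero hs0') heq
    have hzz' : z = z' := by
      rw [ZMod.natCast_eq_natCast_iff', Nat.mod_eq_of_lt b3, Nat.mod_eq_of_lt b3'] at hzz
      exact hzz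
    subst hzz'
    obtain ⟨n, hn⟩ : ∃ n, x.1 * z = x.2 * p + n := ⟨x.1 * z - x.2 * p, by omega⟩
    obtain ⟨n', hn'⟩ : ∃ n, x'.1 * z = x'.2 * p + n := ⟨x'.1 * z - x'.2 * p, by omega⟩
    have hnH : n ≤ H := by
      have : x.1 * z ≤ x.1 * (z + s * h) := Nat.mul_le_mul_left _ (by omega)
      omega
    have hnH' : n' ≤ H := by
      have : x'.1 * z ≤ x'.1 * (z + s * h) := Nat.mul_le_mul_left _ (by omega)
      omega
    have hrel : ((x'.1:ℤ) * n - x.1 * n') = ((x'.2:ℤ) * x.1 - x.2 * x'.1) * p := by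
      have e1 : (x.1:ℤ) * z = x.2 * p + n := by exact_mod_cast hn
      have e2 : (x'.1:ℤ) * z = x'.2 * p + n' := by exact_mod_cast hn'
      linear_combination (x.1:ℤ) * e2 - (x'.1:ℤ) * e1
    have hA : x'.1 * n < p := lt_of_le_of_lt (by rw [mul_comm]; exact Nat.mul_le_mul hnH h2') hHY
    have hB : x.1 * n' < p := lt_of_le_of_lt (by rw [mul_comm]; exact Nat.mul_le_mul hnH' h2) hHY
    have hA' : ((x'.1:ℤ) * n) < p := by exact_mod_cast hA
    have hB' : ((x.1:ℤ) * n') < p := by exact_mod_cast hB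
    have hA0 : 0 ≤ ((x'.1:ℤ) * n) := by positivity
    have hB0 : 0 ≤ ((x.1:ℤ) * n') := by positivity
    have hz0 : ((x'.2:ℤ) * x.1 - x.2 * x'.1) = 0 := by
      by_contra hne
      have g1 := Int.one_le_abs hne
      have g2 : |((x'.1:ℤ) * n - x.1 * n')| < p := by
        rw [abs_lt]; constructor <;> linarith
      rw [hrel, abs_mul, abs_of_nonneg (by positivity : (0:ℤ) ≤ p)] at g2
      nlinarith
    have hcross : x'.2 * x.1 = x.2 * x'.1 := by
      have : (x'.2:ℤ) * x.1 = x.2 * x'.1 := by linarith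
      exact_mod_cast this
    have d1 : x.1 ∣ x'.1 := h6.dvd_of_dvd_mul_left ⟨x'.2, by linarith [mul_comm x'.2 x.1]⟩
    have d2 : x'.1 ∣ x.1 := h6'.dvd_of_dvd_mul_left ⟨x.2, by linarith [mul_comm x.2 x'.1]⟩
    have q1 : x.1 = x'.1 := Nat.dvd_antisymm d1 d2
    have q2 : x.2 = x'.2 := by
      rw [← q1] at hcross
      exact (Nat.eq_of_mul_eq_mul_right (by omega) hcross).symm
    have : x = x' := Prod.ext q1 q2
    subst this
    rfl

lemma good_of_min (p : ℕ) [Fact p.Prime] (χ : DirichletCharacter ℂ p) (u v : ℕ)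
    (hmin : ∀ q : ℕ, q.Prime → χ (q : ZMod p) ∉ ({0, 1} : Set ℂ) → q ≠ u → v ≤ q) :
    ∀ n : ℕ, 0 < n → n < v → n < p → ¬ u ∣ n → χ (n : ZMod p) = 1 := by
  intro n
  induction n using Nat.strong_induction_on with
  | _ n ih =>
    intro hn hv hnp hun
    by_cases h1 : n = 1
    · subst h1; simp
    have hq := Nat.minFac_prime h1
    obtain ⟨m, hm⟩ := Nat.minFac_dvd n
    set q := n.minFac with hqd
    have hm0 : 0 < m := by
      rcases Nat.eq_zero_or_pos m with h | h
      · subst h; omega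
      · exact h
    have hmn : m < n := by
      have := hq.two_le
      nlinarith
    have hqn : q ≤ n := Nat.minFac_le hn
    have e1 : χ (m : ZMod p) = 1 := by
      apply ih m hmn hm0 (by omega) (by omega)
      intro hd
      exact hun (hm ▸ hd.mul_left q)
    have e2 : χ (q : ZMod p) = 1 := by
      by_contra hne
      have hq0 : χ (q : ZMod p) ≠ 0 := by
        have hz : (q : ZMod p) ≠ 0 := by
          intro h0
          have := Nat.le_of_dvd hq.pos ((ZMod.natCast_eq_zero_iff _ _).mp h0)
          omega
        exact ((isUnit_iff_ne_zero.mpr hz).map χ).ne_zero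
      have := hmin q hq (by simp [hne, hq0]) (by
        intro h; apply hun; rw [← h]; exact Nat.minFac_dvd n)
      omega
    rw [hm, Nat.cast_mul, map_mul, e1, e2, one_mul]

lemma exists_g (p : ℕ) [Fact p.Prime] (χ : DirichletCharacter ℂ p) (hχ : χ ≠ 1) (u H : ℕ)
    (hu : u.Prime) (hH : 200 ≤ H) (hHp : H < p)
    (hgood : ∀ n : ℕ, 0 < n → n ≤ H → ¬ u ∣ n → χ (n : ZMod p) = 1) :
    ∃ g : ℕ, 64 ≤ g ∧ 2 * g < p ∧ ∀ y : ZMod p, χ y = 1 → y ^ g = 1 := by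
  classical
  set K := χ.toUnitHom.ker with hK
  have hmemK : ∀ y : (ZMod p)ˣ, χ (y : ZMod p) = 1 → y ∈ K := by
    intro y hy
    rw [hK, MonoidHom.mem_ker]
    ext
    simpa using hy
  refine ⟨Nat.card K, ?_, ?_, ?_⟩
  · have hex : ∀ k : Fin 64, ∃ n : ℕ, (n = 2 * (k:ℕ) + 1 ∨ n = 2 * (k:ℕ) + 2) ∧ ¬ u ∣ n := by
      intro k
      by_cases h1 : u ∣ 2 * (k:ℕ) + 1
      · refine ⟨_, Or.inr rfl, ?_⟩
        intro h2
        have := (Nat.dvd_sub h2 h1)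
        have h3 : 2 * (k:ℕ) + 2 - (2 * (k:ℕ) + 1) = 1 := by omega
        rw [h3] at this
        exact hu.one_lt.ne' (Nat.dvd_one.mp this)
      · exact ⟨_, Or.inl rfl, h1⟩
    choose f hf1 hf2 using hex
    have hf3 : ∀ k, χ (f k : ZMod p) = 1 := by
      intro k
      have := k.2
      exact hgood _ (by rcases hf1 k with h | h <;> omega) (by rcases hf1 k with h | h <;> omega)
        (hf2 k)
    have hne : ∀ k, (f k : ZMod p) ≠ 0 := by
      intro k h0
      have := hf3 k
      rw [h0, MulChar.map_zero] at this
      exact zero_ne_one this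
    let F : Fin 64 → K := fun k => ⟨Units.mk0 _ (hne k), hmemK _ (by simpa using hf3 k)⟩
    have hF : Function.Injective F := by
      intro k l hkl
      have h1 : (f k : ZMod p) = f l := by
        have := congrArg (fun y : K => ((y : (ZMod p)ˣ) : ZMod p)) hkl
        simpa [F] using this
      have b1 : f k < p := by have := k.2; rcases hf1 k with h | h <;> omega
      have b2 : f l < p := by have := l.2; rcases hf1 l with h | h <;> omega
      rw [ZMod.natCast_eq_natCast_iff', Nat.mod_eq_of_lt b1, Nat.mod_eq_of_lt b2] at h1
      apply Fin.ext
      rcases hf1 k with h | h <;> rcases hf1 l with h' | h' <;> omega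
    have := Nat.card_le_card_of_injective F hF
    simpa using this
  · have h1 := K.card_mul_index
    have h2 : Nat.card (ZMod p)ˣ = p - 1 := by
      rw [Nat.card_eq_fintype_card, ZMod.card_units_eq_totient, Nat.totient_prime Fact.out]
    have h3 : K.index ≠ 1 := by
      rw [Ne, Subgroup.index_eq_one]
      intro ht
      apply hχ
      ext y
      have : y ∈ K := by rw [ht]; trivial
      rw [hK, MonoidHom.mem_ker] at this
      have := congrArg (fun y : ℂˣ => (y : ℂ)) this
      simpa using this
    have h4 : K.index ≠ 0 := Subgroup.index_ne_zero_of_finite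
    have h5 : 2 ≤ K.index := by omega
    rw [h2] at h1
    have := (Fact.out : p.Prime).two_le
    have : Nat.card K * 2 ≤ Nat.card K * K.index := Nat.mul_le_mul_left _ h5
    omega
  · intro y hy
    have hy0 : y ≠ 0 := by
      intro h0
      rw [h0, MulChar.map_zero] at hy
      exact zero_ne_one hy
    have h1 := hmemK (Units.mk0 y hy0) (by simpa using hy)
    have h2 := pow_card_eq_one' (x := (⟨Units.mk0 y hy0, h1⟩ : K))
    have h3 : (Units.mk0 y hy0) ^ Nat.card K = 1 := congrArg Subtype.val h2
    have h4 := congrArg Units.val h3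
    rw [Units.val_pow_eq_pow_val] at h4
    exact h4

lemma exists_h (g : ℕ) (hg : 64 ≤ g) : ∃ h : ℕ, 2 ≤ h ∧ 2 * h * 4 ^ h ≤ g ∧
    g < 2 * (h + 1) * 4 ^ (h + 1) := by
  have hP : (fun h => 2 * h * 4 ^ h ≤ g) 2 := by norm_num; exact hg
  refine ⟨Nat.findGreatest (fun h => 2 * h * 4 ^ h ≤ g) g, ?_, ?_, ?_⟩
  · exact Nat.le_findGreatest (by omega) hP
  · exact Nat.findGreatest_spec (P := fun h => 2 * h * 4 ^ h ≤ g) (m := 2) (by omega) hP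
  · by_contra hlt
    push Not at hlt
    set h := Nat.findGreatest (fun h => 2 * h * 4 ^ h ≤ g) g
    have : h + 1 ≤ g := by
      refine le_trans ?_ hlt
      have : 1 ≤ 4 ^ (h+1) := Nat.one_le_pow _ _ (by norm_num)
      nlinarith
    have := Nat.le_findGreatest (P := fun h => 2 * h * 4 ^ h ≤ g) this hlt
    omega

/-- combinatorial core -/
lemma core (p : ℕ) [Fact p.Prime] (χ : DirichletCharacter ℂ p) (hχ : χ ≠ 1) (u H : ℕ)
    (hu : u.Prime) (hH : 200 ≤ H) (hHp : H < p)
    (hgood : ∀ n : ℕ, 0 < n → n ≤ H → ¬ u ∣ n → χ (n : ZMod p) = 1) :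
    ∃ g h s : ℕ, 2 ≤ h ∧ 2 * g < p ∧ 2 * h * 4 ^ h ≤ g ∧ g < 2 * (h + 1) * 4 ^ (h + 1) ∧
      1 ≤ s ∧ s ≤ 2 * h ∧ ∀ Y : ℕ, 100 ≤ Y → 2 * Y * (3 * (s * h)) ≤ H → H * (2 * Y) < p →
      s * (pairsSet Y u).card * 2 ^ h ≤ 2 ^ h + 4 * g := by
  classical
  obtain ⟨g, hg64, hgp, hgpow⟩ := exists_g p χ hχ u H hu hH hHp hgood
  obtain ⟨h, hh2, hcond, hcond2⟩ := exists_h g hg64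
  have hhp : 2 * h < p := by
    have : 1 ≤ 4 ^ h := Nat.one_le_pow _ _ (by norm_num)
    nlinarith
  obtain ⟨s, hs, hs1, hs2⟩ : ∃ s, (s = u ∨ (s = 1 ∧ 2 * h < u)) ∧ 1 ≤ s ∧ s ≤ 2 * h := by
    by_cases hc : u ≤ 2 * h
    · exact ⟨u, Or.inl rfl, hu.pos, hc⟩
    · exact ⟨1, Or.inr ⟨rfl, by omega⟩, le_rfl, by omega⟩
  refine ⟨g, h, s, hh2, hgp, hcond, hcond2, hs1, hs2, ?_⟩
  intro Y hY hYH hHY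
  set S : Finset (ZMod p) := Finset.univ.filter
    (fun x => ∀ i : Fin h, χ (x + ((i:ℕ) + 1 : ℕ)) = (χ (s : ZMod p))⁻¹) with hSdef
  have hlow := lower p χ u H h s Y hu hgood hs hs1 (by omega) (by omega) hYH hHY hHp S (by
    intro x hx; rw [hSdef, Finset.mem_filter]; exact ⟨Finset.mem_univ _, hx⟩)
  have hs0 : (s : ZMod p) ≠ 0 := by
    intro h0
    have := Nat.le_of_dvd hs1 ((ZMod.natCast_eq_zero_iff _ _).mp h0)
    omega
  have hχs : χ (s : ZMod p) ≠ 0 := ((isUnit_iff_ne_zero.mpr hs0).map χ).ne_zero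
  obtain ⟨D, hD⟩ : ∃ D, 2 ^ h = 4 * D := ⟨2 ^ (h - 2), by
    rw [show (4:ℕ) = 2 ^ 2 by norm_num, ← pow_add]; congr 1; omega⟩
  have hD0 : 0 < D := by
    have : 0 < 2 ^ h := by positivity
    omega
  have hst := stepanov p h g D (by omega) hD hgp hcond
    (fun i => -(((i:ℕ) + 1 : ℕ) : ZMod p)) (by
      intro i j hij
      have h1 : (((i:ℕ) + 1 : ℕ) : ZMod p) = (((j:ℕ) + 1 : ℕ) : ZMod p) := neg_injective hij
      have := i.2
      have := j.2
      rw [ZMod.natCast_eq_natCast_iff', Nat.mod_eq_of_lt (by omega), Nat.mod_eq_of_lt (by omega)]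
        at h1
      apply Fin.ext; omega)
    (((s : ZMod p)⁻¹) ^ g) (pow_ne_zero _ (inv_ne_zero hs0)) S (by
      intro x hx i
      rw [hSdef, Finset.mem_filter] at hx
      have h1 := hx.2 i
      have h2 : χ ((s : ZMod p) * (x + ((i:ℕ) + 1 : ℕ))) = 1 := by
        rw [map_mul, h1, mul_inv_cancel₀ hχs]
      have h3 := hgpow _ h2
      rw [mul_pow] at h3
      rw [sub_neg_eq_add, inv_pow]
      exact eq_inv_of_mul_eq_one_right h3)
  set P := (pairsSet Y u).card
  have h1 : D * (s * h * P) ≤ h * D + g * h := (Nat.mul_le_mul_left _ hlow).trans hst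
  have h2 : h * (D * (s * P)) ≤ h * (D + g) := by nlinarith
  have h3 := Nat.le_of_mul_le_mul_left h2 (by omega)
  rw [hD]
  nlinarith

lemma final_ineq (w L : ℝ) (hw : 237 ≤ w) (hL : 43 ≤ L) (g h s Y H P : ℕ)
    (hh2 : 2 ≤ h) (hgp : 2 * (g:ℝ) ≤ w ^ 8) (hcond2 : g < 2 * (h + 1) * 4 ^ (h + 1))
    (hs1 : 1 ≤ s) (hs2 : s ≤ 2 * h) (hhL : (h:ℝ) ≤ 0.7215 * L)
    (hshY : 4.9 * (w ^ 2 * L ^ 2) ≤ (s * h : ℝ) * Y)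
    (hP : (Y:ℝ) ^ 2 / 8 ≤ P) (hfin : s * P * 2 ^ h ≤ 2 ^ h + 4 * g) : False := by
  have hL0 : 0 < L := by linarith
  have hw0 : 0 < w := by linarith
  have hs1' : (1:ℝ) ≤ s := by exact_mod_cast hs1
  have hs2' : (s:ℝ) ≤ 2 * h := by exact_mod_cast hs2
  have hh2' : (2:ℝ) ≤ h := by exact_mod_cast hh2
  set N : ℝ := s * P with hN
  set T : ℝ := 2 ^ h with hT
  have hT0 : 0 < T := by positivity
  have hfin' : N * T ≤ T + 4 * g := by rw [hN, hT]; exact_mod_cast hfin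
  have hg' : (g:ℝ) ≤ 8 * (h + 1) * T ^ 2 := by
    have h1 : (g:ℝ) < 2 * (h + 1) * 4 ^ (h + 1) := by exact_mod_cast hcond2
    have h2 : (4:ℝ) ^ (h + 1) = 4 * T ^ 2 := by
      rw [hT, ← pow_mul, mul_comm h 2, pow_mul, pow_succ]; norm_num; ring
    rw [h2] at h1
    linarith
  have hh3 : (h:ℝ) ^ 3 ≤ 0.3757 * L ^ 3 := by
    calc (h:ℝ) ^ 3 ≤ (0.7215 * L) ^ 3 := by gcongr
      _ = 0.7215 ^ 3 * L ^ 3 := by ring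
      _ ≤ 0.3757 * L ^ 3 := by gcongr; norm_num
  have hsh2 : (s:ℝ) * h ^ 2 ≤ 0.7514 * L ^ 3 := by
    calc (s:ℝ) * (h:ℝ) ^ 2 ≤ 2 * (h:ℝ) * (h:ℝ) ^ 2 := by gcongr
      _ = 2 * (h:ℝ) ^ 3 := by ring
      _ ≤ _ := by linarith
  have hN0 : 0 ≤ N := by positivity
  have h1 : (4.9 * (w ^ 2 * L ^ 2)) ^ 2 ≤ ((s * h : ℝ) * Y) ^ 2 := by gcongr
  have h2 : ((s * h : ℝ) * Y) ^ 2 ≤ 8 * (s * h ^ 2) * N := by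
    calc ((s * h : ℝ) * Y) ^ 2 = 8 * ((s:ℝ) ^ 2 * (h:ℝ) ^ 2) * ((Y:ℝ) ^ 2 / 8) := by ring
      _ ≤ 8 * ((s:ℝ) ^ 2 * (h:ℝ) ^ 2) * P := by gcongr
      _ = _ := by rw [hN]; ring
  have h3 : 8 * ((s:ℝ) * h ^ 2) * N ≤ 8 * (0.7514 * L ^ 3) * N := by gcongr
  have h4 : L ^ 3 * (3.5 * (w ^ 4 * L)) ≤ L ^ 3 * N := by
    have e : (4.9 * (w ^ 2 * L ^ 2)) ^ 2 = 24.01 * (L ^ 3 * (w ^ 4 * L)) := by ring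
    rw [e] at h1
    have : 0 ≤ L ^ 3 * (w ^ 4 * L) := by positivity
    linarith
  have h5 : 3.5 * (w ^ 4 * L) ≤ N := le_of_mul_le_mul_left h4 (by positivity)
  have h6 : 43 ≤ w ^ 4 * L := by
    have : (1:ℝ) ≤ w ^ 4 := one_le_pow₀ (by linarith)
    nlinarith
  have h7 : 3 * (w ^ 4 * L) ≤ N - 1 := by linarith
  have h8 : (N - 1) * T ≤ 4 * g := by linarith
  have h9 : ((3 * (w ^ 4 * L)) * T) ^ 2 ≤ (4 * g) ^ 2 := by
    have : (3 * (w ^ 4 * L)) * T ≤ 4 * g := le_trans (by gcongr) h8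
    gcongr
  have h10 : (4 * (g:ℝ)) ^ 2 ≤ 48 * L * w ^ 8 * T ^ 2 := by
    calc (4 * (g:ℝ)) ^ 2 = 8 * (2 * g) * g := by ring
      _ ≤ 8 * w ^ 8 * (8 * (h + 1) * T ^ 2) := by gcongr
      _ ≤ 8 * w ^ 8 * (8 * (0.75 * L) * T ^ 2) := by gcongr; linarith
      _ = _ := by ring
  have h11 : (w ^ 8 * L * T ^ 2) * (9 * L) ≤ (w ^ 8 * L * T ^ 2) * 48 := by
    calc _ = ((3 * (w ^ 4 * L)) * T) ^ 2 := by ring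
      _ ≤ _ := h9.trans h10
      _ = _ := by ring
  have := le_of_mul_le_mul_left h11 (by positivity)
  linarith

theorem q2_bound_unconditional (p : ℕ) [Fact p.Prime] (hp : (10:ℕ)^19 ≤ p)
    (χ : DirichletCharacter ℂ p) (hχ : χ ≠ 1)
    (q₁ q₂ : ℕ) (hq₁ : q₁.Prime) (hq₂ : q₂.Prime) (hlt : q₁ < q₂)
    (hnr₁ : χ (q₁ : ZMod p) ∉ ({0, 1} : Set ℂ))
    (hnr₂ : χ (q₂ : ZMod p) ∉ ({0, 1} : Set ℂ))
    (hmin₁ : ∀ q : ℕ, q.Prime → χ (q : ZMod p) ∉ ({0, 1} : Set ℂ) → q₁ ≤ q)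
    (hmin₂ : ∀ q : ℕ, q.Prime → χ (q : ZMod p) ∉ ({0, 1} : Set ℂ) → q ≠ q₁ → q₂ ≤ q) :
    (q₂ : ℝ) < 53 * (p : ℝ) ^ ((1:ℝ)/4) * (Real.log p) ^ 2 := by
  by_contra hcon
  push Not at hcon
  have hpR : (10:ℝ) ^ 19 ≤ p := by exact_mod_cast hp
  have hp0 : (0:ℝ) < p := lt_of_lt_of_le (by norm_num) hpR
  set L := Real.log p with hLdef
  set w : ℝ := (p:ℝ) ^ ((1:ℝ)/8) with hwdef
  have hw0 : 0 < w := Real.rpow_pos_of_pos hp0 _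
  have hw8 : w ^ 8 = p := by
    rw [hwdef, ← Real.rpow_natCast, ← Real.rpow_mul hp0.le]; norm_num
  have hw2 : (p:ℝ) ^ ((1:ℝ)/4) = w ^ 2 := by
    rw [hwdef, ← Real.rpow_natCast, ← Real.rpow_mul hp0.le]; norm_num
  rw [hw2] at hcon
  have hl1 := Real.log_two_gt_d9
  have hl2 := Real.log_two_lt_d9
  have hw : 237 ≤ w := by
    by_contra hlt'
    push Not at hlt'
    have : w ^ 8 < 237 ^ 8 := by gcongr
    rw [hw8] at this
    norm_num at this hpR
    linarith
  have hL : 43 ≤ L := by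
    have h1 : Real.log ((2:ℝ) ^ 63) ≤ L := Real.log_le_log (by positivity) (by
      refine le_trans ?_ hpR; norm_num)
    rw [Real.log_pow] at h1
    norm_num at h1
    linarith
  have hL0 : 0 < L := by linarith
  have hLw : L ≤ 0.28 * w := by
    have h1 : L = 8 * Real.log w := by rw [hLdef, ← hw8, Real.log_pow]; norm_num
    have h2 : Real.log (w / 2 ^ 8) ≤ w / 2 ^ 8 - 1 := Real.log_le_sub_one_of_pos (by positivity)
    rw [Real.log_div hw0.ne' (by norm_num), Real.log_pow] at h2
    norm_num at h2
    linarith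
  set X := w ^ 2 * L ^ 2 with hX
  have hX0 : 0 < X := by positivity
  have hwsq : 56169 ≤ w ^ 2 := by nlinarith
  have hLsq : 1 ≤ L ^ 2 := by nlinarith
  have hXL : 56169 * L ^ 2 ≤ X := by rw [hX]; gcongr
  set H := ⌊30 * X⌋₊ with hH
  have hH1 : (H:ℝ) ≤ 30 * X := Nat.floor_le (by positivity)
  have hH2 : 30 * X < H + 1 := Nat.lt_floor_add_one _
  have hX2 : 150 * X ^ 2 < w ^ 8 := by
    have h1 : L ^ 4 ≤ (0.28 * w) ^ 4 := by gcongr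
    have h2 : 150 * X ^ 2 = 150 * w ^ 4 * L ^ 4 := by rw [hX]; ring
    have h3 : 150 * w ^ 4 * L ^ 4 ≤ 150 * w ^ 4 * (0.28 * w) ^ 4 := by gcongr
    have h4 : 150 * w ^ 4 * (0.28 * w) ^ 4 = (150 * 0.28 ^ 4) * w ^ 8 := by ring
    have h5 : 0 < w ^ 8 := by positivity
    have h6 : (150 * 0.28 ^ 4 : ℝ) < 1 := by norm_num
    rw [h2]
    nlinarith
  have hHp : H < p := by
    have : (H:ℝ) < p := by
      rw [← hw8]; nlinarith
    exact_mod_cast this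
  have hH200 : 200 ≤ H := by
    have : (200:ℝ) ≤ H := by linarith
    exact_mod_cast this
  have hHq : H < q₂ := by
    have : (H:ℝ) < q₂ := by
      have e : 53 * w ^ 2 * L ^ 2 = 53 * X := by rw [hX]; ring
      linarith
    exact_mod_cast this
  obtain ⟨g, h, s, hh2, hgp, hcond, hcond2, hs1, hs2, hY⟩ := core p χ hχ q₁ H hq₁ hH200 hHp
    (fun n h1 h2 h3 => good_of_min p χ q₁ q₂ hmin₂ n h1 (by omega) (by omega) h3)
  have hs1' : (1:ℝ) ≤ s := by exact_mod_cast hs1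
  have hs2' : (s:ℝ) ≤ 2 * h := by exact_mod_cast hs2
  have hh2' : (2:ℝ) ≤ h := by exact_mod_cast hh2
  have hgp' : 2 * (g:ℝ) ≤ w ^ 8 := by rw [hw8]; exact_mod_cast hgp.le
  have hhL : (h:ℝ) ≤ 0.7215 * L := by
    have h1 : 4 ^ h ≤ p := by
      have : 1 * 4 ^ h ≤ 2 * h * 4 ^ h := Nat.mul_le_mul_right _ (by omega)
      omega
    have h2 : (2:ℝ) ^ (2 * h) ≤ p := by
      rw [pow_mul]; norm_num; exact_mod_cast h1
    have h3 : Real.log ((2:ℝ) ^ (2 * h)) ≤ L := Real.log_le_log (by positivity) h2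
    rw [Real.log_pow] at h3
    push_cast at h3
    nlinarith
  have hsh : (s * h : ℝ) ≤ 1.05 * L ^ 2 := by
    calc (s * h : ℝ) ≤ 2 * h * h := by gcongr
      _ = 2 * h ^ 2 := by ring
      _ ≤ 2 * (0.7215 * L) ^ 2 := by gcongr
      _ ≤ 1.05 * L ^ 2 := by nlinarith
  have hsh0 : 0 < 6 * (s * h) := by
    have : 0 < s * h := Nat.mul_pos hs1 (by omega)
    omega
  set Y := H / (6 * (s * h)) with hYdef
  have hY1 : Y * (6 * (s * h)) ≤ H := Nat.div_mul_le_self _ _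
  have hY2 : H < 6 * (s * h) * (Y + 1) := by
    have := Nat.lt_mul_div_succ H hsh0
    exact this
  have hY2' : (H:ℝ) < 6 * (s * h) * (Y + 1) := by exact_mod_cast hY2
  have hshY : 4.9 * X ≤ (s * h : ℝ) * Y := by linarith
  have hY100 : 100 ≤ Y := by
    by_contra hlt'
    have h1 : (Y:ℝ) ≤ 100 := by exact_mod_cast (by omega : Y ≤ 100)
    have h2 : (s * h : ℝ) * Y ≤ 1.05 * L ^ 2 * 100 := by gcongr
    linarith
  have hHY : H * (2 * Y) < p := by
    have h1 : 1 * 2 ≤ s * h := Nat.mul_le_mul hs1 hh2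
    have h2 : Y * (6 * 2) ≤ Y * (6 * (s * h)) := Nat.mul_le_mul_left _ (by omega)
    have h3 : 6 * (H * (2 * Y)) ≤ H * H := by
      have e : 6 * (H * (2 * Y)) = H * (Y * (6 * 2)) := by ring
      rw [e]; exact Nat.mul_le_mul_left _ (h2.trans hY1)
    have h4 : 6 * ((H * (2 * Y) : ℕ) : ℝ) ≤ H * H := by exact_mod_cast h3
    have h5 : (H:ℝ) * H ≤ (30 * X) * (30 * X) := by gcongr
    clear_value H Y X L w
    have h6 : ((H * (2 * Y) : ℕ) : ℝ) < p := by rw [← hw8]; linarith [sq X]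
    exact_mod_cast h6
  exact final_ineq w L hw hL g h s Y H _ hh2 hgp' hcond2 hs1 hs2 hhL hshY
    (pairs_card Y q₁ hq₁ hY100) (hY Y hY100 (by linarith) hHY)
end

section
/- Let χ be a non-principal Dirichlet character modulo a prime p ≥ 10^{18} such that the order of χ (as an element of the group of Dirichlet characters mod p) is odd, and let q_1 < q_2 be the two smallest prime non-residues of χ. Then q_1·q_2 < 24·p^{1/2}·(log p)². -/
namespace QQ

open Polynomial

section stepanov
variable {F : Type*} [Field F]

/-- twisted derivation sending P to B times the derivative of P plus L times P -/
noncomputable def tw (B L : F[X]) : F[X] →ₗ[F] F[X] :=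
  (LinearMap.mulLeft F B) ∘ₗ (derivative : F[X] →ₗ[F] F[X]) + LinearMap.mulLeft F L

lemma tw_apply (B L P : F[X]) : tw B L P = B * derivative P + L * P := by
  simp [tw]

lemma tw_pow_mul (B L f P : F[X]) (hf : tw B 0 f = L * f) (k : ℕ) :
    ((tw B 0) ^ k) (P * f) = ((tw B L) ^ k) P * f := by
  induction k generalizing P with
  | zero => simp
  | succ k ih =>
    rw [pow_succ, pow_succ, Module.End.mul_apply, Module.End.mul_apply, ← ih]
    congr 1
    simp only [tw_apply, derivative_mul] at hf ⊢
    linear_combination P * hf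

lemma tw_pow_const (B L c P : F[X]) (hc : derivative c = 0) (k : ℕ) :
    ((tw B L) ^ k) (P * c) = ((tw B L) ^ k) P * c := by
  induction k generalizing P with
  | zero => simp
  | succ k ih =>
    rw [pow_succ, Module.End.mul_apply, Module.End.mul_apply, ← ih]
    congr 1
    simp only [tw_apply, derivative_mul, hc]
    ring

/-- class of polynomials killed by `n+1` derivatives -/
def Cl (n : ℕ) (Q : F[X]) : Prop := derivative^[n + 1] Q = 0

lemma iter_zero_of_le {a b : ℕ} (hab : a ≤ b) {Q : F[X]} (h : derivative^[a] Q = 0) :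
    derivative^[b] Q = 0 := by
  obtain ⟨c, rfl⟩ := Nat.exists_eq_add_of_le hab
  rw [add_comm, Function.iterate_add_apply, h]
  simp

lemma Cl.mono {a b : ℕ} (hab : a ≤ b) {Q : F[X]} (h : Cl a Q) : Cl b Q :=
  iter_zero_of_le (by omega) h

lemma Cl.zero (a : ℕ) : Cl a (0 : F[X]) := by simp [Cl]

lemma Cl.add {a : ℕ} {P Q : F[X]} (hP : Cl a P) (hQ : Cl a Q) : Cl a (P + Q) := by
  unfold Cl at *
  rw [iterate_map_add, hP, hQ, add_zero]

lemma Cl.neg {a : ℕ} {P : F[X]} (hP : Cl a P) : Cl a (-P) := by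
  unfold Cl at *
  rw [iterate_derivative_neg, hP, neg_zero]

lemma Cl.sum {ι : Type*} {a : ℕ} (s : Finset ι) (f : ι → F[X]) (h : ∀ i ∈ s, Cl a (f i)) :
    Cl a (∑ i ∈ s, f i) := by
  unfold Cl at *
  rw [iterate_derivative_sum]
  exact Finset.sum_eq_zero h

lemma Cl.mul {a b : ℕ} {P Q : F[X]} (hP : Cl a P) (hQ : Cl b Q) : Cl (a + b) (P * Q) := by
  unfold Cl at *
  rw [iterate_derivative_mul]
  refine Finset.sum_eq_zero fun k hk => ?_
  have hk' : k < a + b + 1 + 1 := by simpa using hk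
  by_cases h : b + 1 ≤ k
  · rw [iter_zero_of_le h hQ]; simp
  · rw [iter_zero_of_le (by omega) hP]; simp

lemma Cl.prod {ι : Type*} (s : Finset ι) (a : ι → ℕ) (f : ι → F[X]) (h : ∀ i ∈ s, Cl (a i) (f i)) :
    Cl (∑ i ∈ s, a i) (∏ i ∈ s, f i) := by
  classical
  induction s using Finset.induction_on with
  | empty => simp [Cl]
  | insert x s hx ih =>
    rw [Finset.sum_insert hx, Finset.prod_insert hx]
    exact (h x (by simp)).mul (ih fun i hi => h i (by simp [hi]))

lemma Cl.derivative {a : ℕ} {P : F[X]} (hP : Cl a P) : Cl a (derivative P) := by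
  unfold Cl at *
  rw [← Function.iterate_succ_apply]
  exact iter_zero_of_le (by omega) hP

lemma Cl.of_natDegree {a : ℕ} {P : F[X]} (hP : P.natDegree ≤ a) : Cl a P :=
  iterate_derivative_eq_zero (by omega)

lemma Cl.of_const {P : F[X]} (hP : Polynomial.derivative P = 0) : Cl 0 P := by
  simpa [Cl] using hP

lemma Cl.tw {a h : ℕ} {B L P : F[X]} (hB : Cl h B) (hL : Cl h L) (hP : Cl a P) :
    Cl (a + h) (tw B L P) := by
  rw [tw_apply, add_comm a h]
  exact (hB.mul hP.derivative).add (hL.mul hP)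

lemma Cl.tw_pow {a h : ℕ} {B L P : F[X]} (hB : Cl h B) (hL : Cl h L) (hP : Cl a P) (k : ℕ) :
    Cl (a + k * h) ((QQ.tw B L ^ k) P) := by
  induction k with
  | zero => simpa using hP
  | succ k ih =>
    rw [pow_succ', Module.End.mul_apply, Nat.succ_mul, ← add_assoc]
    exact Cl.tw hB hL ih

lemma Cl.det {n : ℕ} (M : Matrix (Fin n) (Fin n) F[X]) (a : Fin n → ℕ)
    (h : ∀ k j, Cl (a k) (M k j)) : Cl (∑ k, a k) M.det := by
  rw [← Matrix.det_transpose, Matrix.det_apply]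
  refine Cl.sum _ _ fun σ _ => ?_
  have : Cl (∑ k, a k) (∏ i, M.transpose (σ i) i) :=
    Cl.prod _ _ _ fun i _ => h i (σ i)
  rcases Int.units_eq_one_or (Equiv.Perm.sign σ) with hs | hs <;> rw [hs]
  · simpa using this
  · simpa using this.neg

lemma iter_deriv_mul_pow (x : F) (i v : ℕ) (G : F[X]) :
    ∃ G' : F[X], derivative^[i] ((X - C x) ^ (v + i) * G) = (X - C x) ^ v * G' ∧
      G'.eval x = ((v + i).descFactorial i : F) * G.eval x := by
  induction i generalizing G with
  | zero => exact ⟨G, by simp, by simp⟩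
  | succ i ih =>
    obtain ⟨G', h1, h2⟩ := ih (((v + i + 1 : ℕ) : F[X]) * G + (X - C x) * derivative G)
    refine ⟨G', ?_, ?_⟩
    · rw [Function.iterate_succ_apply, ← h1]
      congr 1
      rw [derivative_mul, ← add_assoc, derivative_X_sub_C_pow]
      simp
      ring
    · rw [h2, ← add_assoc, Nat.succ_descFactorial_succ]
      simp
      ring

lemma Cl.rootMult {p : ℕ} [hp : Fact p.Prime] [CharP F p] {N : ℕ} {R : F[X]} (hR : Cl N R) (h0 : R ≠ 0)
    (x : F) : R.rootMultiplicity x % p ≤ N := by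
  by_contra hcon
  push Not at hcon
  set v := R.rootMultiplicity x with hv
  obtain ⟨G, hG, hG2⟩ := exists_eq_pow_rootMultiplicity_mul_and_not_dvd R h0 x
  have hle : N + 1 ≤ v := le_trans hcon (Nat.mod_le _ _)
  obtain ⟨w, hw⟩ := Nat.exists_eq_add_of_le' hle
  rw [← hv, hw] at hG
  obtain ⟨G', h1, h2⟩ := iter_deriv_mul_pow x (N + 1) w G
  unfold Cl at hR
  rw [← hG, hR] at h1
  have hG' : G' = 0 := by
    rcases mul_eq_zero.mp h1.symm with h | h
    · exact absurd h (pow_ne_zero _ (X_sub_C_ne_zero x))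
    · exact h
  rw [hG', eval_zero, ← hw] at h2
  rcases mul_eq_zero.mp h2.symm with h | h
  · rw [CharP.cast_eq_zero_iff F p, Nat.descFactorial_eq_prod_range,
      (Nat.Prime.prime hp.out).dvd_finsetProd_iff] at h
    obtain ⟨j, hj, hd⟩ := h
    have hj' : j < N + 1 := by simpa using hj
    have h3 := Nat.div_add_mod v p
    have h4 : p ∣ v % p - j := by
      have : v - j = p * (v / p) + (v % p - j) := by omega
      rw [this] at hd
      exact (Nat.dvd_add_right (dvd_mul_right _ _)).mp hd
    have h5 := Nat.le_of_dvd (by omega) h4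
    have := Nat.mod_lt v hp.out.pos
    have : j = 0 := by omega
    omega
  · exact hG2 (dvd_iff_isRoot.mpr h)

/-- Wronskian lemma -/
lemma wronskian {p : ℕ} [hp : Fact p.Prime] [CharP F p] (B : F[X]) (hB : B ≠ 0) (n : ℕ) (g : Fin n → F[X])
    (hdet : (Matrix.of fun k j : Fin n => ((tw B 0) ^ (k : ℕ)) (g j)).det = 0) :
    ∃ c : Fin n → F[X], c ≠ 0 ∧ (∀ j, derivative (c j) = 0) ∧ ∑ j, c j * g j = 0 := by
  induction n with
  | zero => simp at hdet
  | succ n ih =>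
    by_cases ht : (Matrix.of fun k j : Fin n => ((tw B 0) ^ (k : ℕ)) (g j.succ)).det = 0
    · obtain ⟨c, hc0, hc1, hc2⟩ := ih (fun j => g j.succ) ht
      refine ⟨Fin.cons 0 c, ?_, ?_, ?_⟩
      · intro h
        apply hc0
        funext j
        have := congrFun h j.succ
        simpa using this
      · intro j
        refine Fin.cases ?_ (fun j => ?_) j
        · simp
        · simpa using hc1 j
      · rw [Fin.sum_univ_succ]; simpa using hc2
    · obtain ⟨v, hv0, hv⟩ := Matrix.exists_mulVec_eq_zero_iff.mpr hdet
      have hrow : ∀ k : ℕ, k < n + 1 → ∑ j, ((tw B 0) ^ k) (g j) * v j = 0 := by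
        intro k hk
        have := congrFun hv ⟨k, hk⟩
        simpa [Matrix.mulVec, dotProduct] using this
      have hker : ∀ u : Fin n → F[X],
          (∀ k : ℕ, k < n → ∑ j : Fin n, ((tw B 0) ^ k) (g j.succ) * u j = 0) → u = 0 := by
        intro u hu
        by_contra hne
        apply ht
        refine Matrix.exists_mulVec_eq_zero_iff.mp ⟨u, hne, ?_⟩
        funext k
        simpa [Matrix.mulVec, dotProduct] using hu k k.2
      have hv00 : v 0 ≠ 0 := by
        intro h0
        apply hv0
        have := hker (fun j => v j.succ) (fun k hk => by
          have := hrow k (by omega)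
          rw [Fin.sum_univ_succ, h0] at this
          simpa using this)
        funext j
        refine Fin.cases h0 (fun j => ?_) j
        exact congrFun this j
      have hD : ∀ k : ℕ, k < n → ∑ j, ((tw B 0) ^ k) (g j) * (B * derivative (v j)) = 0 := by
        intro k hk
        have h1 := congrArg (tw B 0) (hrow k (by omega))
        have h2 := hrow (k + 1) (by omega)
        rw [map_sum, map_zero] at h1
        have h3 : ∀ j, tw B 0 (((tw B 0) ^ k) (g j) * v j) =
            ((tw B 0) ^ k) (g j) * (B * derivative (v j)) + ((tw B 0) ^ (k + 1)) (g j) * v j := by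
          intro j
          rw [pow_succ', Module.End.mul_apply]
          simp only [tw_apply, derivative_mul]
          ring
        simp only [h3] at h1
        rw [Finset.sum_add_distrib, h2, add_zero] at h1
        exact h1
      have hu := hker (fun j => v 0 * (B * derivative (v j.succ)) - (B * derivative (v 0)) * v j.succ)
        (fun k hk => by
          have h1 := hD k hk
          have h2 := hrow k (by omega)
          rw [Fin.sum_univ_succ] at h1 h2
          have : ∑ j : Fin n, ((tw B 0) ^ k) (g j.succ) *
              (v 0 * (B * derivative (v j.succ)) - (B * derivative (v 0)) * v j.succ) =
              v 0 * ∑ j : Fin n, ((tw B 0) ^ k) (g j.succ) * (B * derivative (v j.succ))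
              - (B * derivative (v 0)) * ∑ j : Fin n, ((tw B 0) ^ k) (g j.succ) * v j.succ := by
            rw [Finset.mul_sum, Finset.mul_sum, ← Finset.sum_sub_distrib]
            refine Finset.sum_congr rfl fun j _ => ?_
            ring
          rw [this]
          linear_combination v 0 * h1 - (B * derivative (v 0)) * h2)
      have hw : ∀ j, v 0 * derivative (v j) = derivative (v 0) * v j := by
        intro j
        refine Fin.cases (by ring) (fun j => ?_) j
        have := congrFun hu j
        simp only [Pi.zero_apply] at this
        apply mul_left_cancel₀ hB
        linear_combination this
      have hp2 := hp.out.two_le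
      refine ⟨fun j => v j * v 0 ^ (p - 1), ?_, ?_, ?_⟩
      · intro h
        have := congrFun h 0
        simp [hv00] at this
      · intro j
        obtain ⟨q, hq⟩ := Nat.exists_eq_add_of_le' hp2
        have hpp : ((q : F[X]) + 1) + 1 = 0 := by
          have : ((p : ℕ) : F[X]) = 0 := by
            rw [← C_eq_natCast, CharP.cast_eq_zero, C_0]
          rw [hq] at this
          push_cast at this
          linear_combination this
        have : p - 1 = q + 1 := by omega
        rw [this, derivative_mul, derivative_pow]
        simp
        linear_combination v 0 ^ q * hw j + v j * v 0 ^ q * derivative (v 0) * hpp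
      · have := hrow 0 (by omega)
        simp only [pow_zero, Module.End.one_apply] at this
        have h2 : ∑ j, v j * v 0 ^ (p - 1) * g j = v 0 ^ (p - 1) * ∑ j, g j * v j := by
          rw [Finset.mul_sum]
          refine Finset.sum_congr rfl fun j _ => ?_
          ring
        rw [h2, this, mul_zero]

end stepanov
end QQ

namespace QQ

open Polynomial

section indep
variable {F : Type*} [Field F]

/-- product of `(X + β_i)^m` over a subset -/
noncomputable def fp {h : ℕ} (β : Fin h → F) (m : ℕ) (e : Finset (Fin h)) : F[X] :=
  ∏ i ∈ e, (X + C (β i)) ^ m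

/-- product of all `X + β_i` -/
noncomputable def bp {h : ℕ} (β : Fin h → F) : F[X] := ∏ i, (X + C (β i))

lemma bp_ne_zero {h : ℕ} (β : Fin h → F) : bp β ≠ 0 :=
  Finset.prod_ne_zero_iff.mpr fun _ _ => X_add_C_ne_zero _

lemma fp_ne_zero {h : ℕ} (β : Fin h → F) (m : ℕ) (e : Finset (Fin h)) : fp β m e ≠ 0 :=
  Finset.prod_ne_zero_iff.mpr fun _ _ => pow_ne_zero _ (X_add_C_ne_zero _)

lemma natDegree_prod_lin {h : ℕ} (β : Fin h → F) (e : Finset (Fin h)) :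
    (∏ i ∈ e, (X + C (β i))).natDegree = e.card := by
  rw [natDegree_prod _ _ (fun i _ => X_add_C_ne_zero _)]
  simp

lemma natDegree_bp {h : ℕ} (β : Fin h → F) : (bp β).natDegree = h := by
  rw [bp, natDegree_prod_lin]; simp

lemma natDegree_fp {h : ℕ} (β : Fin h → F) (m : ℕ) (e : Finset (Fin h)) :
    (fp β m e).natDegree ≤ h * m := by
  rw [fp, Finset.prod_pow, natDegree_pow, natDegree_prod_lin, mul_comm]
  exact Nat.mul_le_mul_right _ (by simpa using Finset.card_le_univ e)

lemma exists_logder {h : ℕ} (β : Fin h → F) (m : ℕ) (e : Finset (Fin h)) :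
    ∃ L : F[X], L.natDegree ≤ h ∧ tw (bp β) 0 (fp β m e) = L * fp β m e := by
  classical
  induction e using Finset.induction_on with
  | empty => exact ⟨0, by simp, by simp [tw_apply, fp]⟩
  | insert i e hi ih =>
    obtain ⟨L, hL1, hL2⟩ := ih
    refine ⟨C (m : F) * ∏ j ∈ Finset.univ.erase i, (X + C (β j)) + L, ?_, ?_⟩
    · refine (natDegree_add_le _ _).trans (max_le ?_ hL1)
      refine (natDegree_C_mul_le _ _).trans ?_
      rw [natDegree_prod_lin]
      simp
    · have hB : bp β = (X + C (β i)) * ∏ j ∈ Finset.univ.erase i, (X + C (β j)) :=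
        (Finset.mul_prod_erase _ _ (Finset.mem_univ i)).symm
      have hf : fp β m (insert i e) = (X + C (β i)) ^ m * fp β m e := by
        rw [fp, Finset.prod_insert hi]; rfl
      rw [hf]
      rw [tw_apply] at hL2 ⊢
      rw [derivative_mul, derivative_pow]
      rcases m with _ | m
      · simp at hL2 ⊢
        linear_combination hL2
      · simp only [add_tsub_cancel_right, derivative_add, derivative_X, derivative_C, add_zero,
          mul_one]
        simp only [zero_mul, add_zero] at hL2 ⊢
        have h2 : bp β * (C ((m + 1 : ℕ) : F) * (X + C (β i)) ^ m * fp β (m + 1) e) =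
          C ((m + 1 : ℕ) : F) * (∏ j ∈ Finset.univ.erase i, (X + C (β j))) *
            ((X + C (β i)) ^ (m + 1) * fp β (m + 1) e) := by
          rw [hB]; ring
        linear_combination (X + C (β i)) ^ (m + 1) * hL2 + h2

lemma rootMult_fp_of_mem {h : ℕ} (β : Fin h → F) (hβ : Function.Injective β) (m : ℕ)
    (e : Finset (Fin h)) (i : Fin h) :
    (fp β m e).rootMultiplicity (-β i) = if i ∈ e then m else 0 := by
  classical
  have key : ∀ e : Finset (Fin h), i ∉ e → (fp β m e).rootMultiplicity (-β i) = 0 := by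
    intro e hi
    apply rootMultiplicity_eq_zero
    rw [IsRoot.def, fp, eval_prod, Finset.prod_eq_zero_iff]
    rintro ⟨j, hj, h0⟩
    simp only [eval_pow, eval_add, eval_X, eval_C] at h0
    refine pow_ne_zero m (fun h1 => ?_) h0
    have h2 : β j = β i := by linear_combination h1
    exact hi (hβ h2 ▸ hj)
  split_ifs with hi
  · have hf : fp β m e = (X - C (-β i)) ^ m * fp β m (e.erase i) := by
      rw [fp, ← Finset.mul_prod_erase _ _ hi]; simp [fp]
    rw [hf, rootMultiplicity_mul (mul_ne_zero (pow_ne_zero _ (X_sub_C_ne_zero _)) (fp_ne_zero _ _ _)),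
      rootMultiplicity_X_sub_C_pow, key _ (by simp), add_zero]
  · exact key e hi

theorem indep {p : ℕ} [hp : Fact p.Prime] [CharP F p] {h : ℕ} (β : Fin h → F)
    (hβ : Function.Injective β) (m D : ℕ) (hm : 2 * m < p) (n : ℕ)
    (hN : ∑ k ∈ Finset.range n, (D + k * h) < m)
    (e : Fin n → Finset (Fin h)) (he : Function.Injective e) (Q : Fin n → F[X])
    (hQ : ∀ j, Cl D (Q j)) (hsum : ∑ j, Q j * fp β m (e j) = 0) : ∀ j, Q j = 0 := by
  classical
  induction n with
  | zero => intro j; exact j.elim0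
  | succ n ih =>
    have hN' : ∑ k ∈ Finset.range n, (D + k * h) < m := by
      rw [Finset.sum_range_succ] at hN; omega
    by_contra hcon
    have hall : ∀ j, Q j ≠ 0 := by
      intro j hj
      apply hcon
      have := ih hN' (fun i => e (j.succAbove i)) (he.comp Fin.succAbove_right_injective)
        (fun i => Q (j.succAbove i)) (fun i => hQ _) (by
          rw [Fin.sum_univ_succAbove _ j, hj] at hsum
          simpa using hsum)
      intro i
      rcases Fin.eq_self_or_eq_succAbove j i with h1 | ⟨k, rfl⟩
      · rw [h1, hj]
      · exact this k
    rcases n with _ | n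
    · simp at hsum
      rcases hsum with h1 | h1
      · exact hall 0 h1
      · exact fp_ne_zero _ _ _ h1
    -- pick two columns and a coordinate
    obtain ⟨a, b, i, hia, hib⟩ : ∃ a b : Fin (n + 1 + 1), ∃ i : Fin h, i ∈ e a ∧ i ∉ e b := by
      have hne : e 0 ≠ e 1 := fun h1 => by simpa using he h1
      by_contra hno
      push Not at hno
      exact hne (Finset.Subset.antisymm (fun i hi => hno 0 1 i hi) (fun i hi => hno 1 0 i hi))
    have hab : a ≠ b := by rintro rfl; exact hib hia
    obtain ⟨j0, hj0⟩ : ∃ j0, b.succAbove j0 = a := Fin.exists_succAbove_eq hab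
    choose L hL1 hL2 using fun e => exists_logder β m e
    set B := bp β with hBdef
    have hBC : Cl h B := Cl.of_natDegree (natDegree_bp β).le
    have hLC : ∀ e, Cl h (L e) := fun e => Cl.of_natDegree (hL1 e)
    let g : Fin (n + 1 + 1) → F[X] := fun j => Q j * fp β m (e j)
    let W : (Fin (n + 1) → Fin (n + 1 + 1)) → Matrix (Fin (n + 1)) (Fin (n + 1)) F[X] :=
      fun σ => Matrix.of fun k j => ((tw B 0) ^ (k : ℕ)) (g (σ j))
    let R : (Fin (n + 1) → Fin (n + 1 + 1)) → Matrix (Fin (n + 1)) (Fin (n + 1)) F[X] :=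
      fun σ => Matrix.of fun k j => ((tw B (L (e (σ j)))) ^ (k : ℕ)) (Q (σ j))
    have hWR : ∀ σ, (W σ).det = (∏ j, fp β m (e (σ j))) * (R σ).det := by
      intro σ
      rw [← Matrix.det_mul_row]
      congr 1
      ext k j
      simp only [W, R, g, Matrix.of_apply]
      rw [tw_pow_mul B _ _ _ (hL2 (e (σ j))), mul_comm]
    have hRC : ∀ σ, Cl (∑ k : Fin (n + 1), (D + k * h)) (R σ).det := fun σ =>
      Cl.det _ _ fun k j => Cl.tw_pow hBC (hLC _) (hQ _) _
    set σ : Fin (n + 1) → Fin (n + 1 + 1) := b.succAbove with hσ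
    have hW0 : (W σ).det ≠ 0 := by
      intro h0
      obtain ⟨c, hc0, hc1, hc2⟩ := wronskian (p := p) B (bp_ne_zero β) (n + 1) (fun j => g (σ j)) h0
      have := ih hN' (fun i => e (σ i)) (he.comp Fin.succAbove_right_injective)
        (fun i => c i * Q (σ i)) (fun i => by
          have := (Cl.of_const (hc1 i)).mul (hQ (σ i))
          simpa using this) (by
          rw [← hc2]
          refine Finset.sum_congr rfl fun j _ => ?_
          simp only [g]; ring)
      apply hc0
      funext j
      rcases mul_eq_zero.mp (this j) with h1 | h1
      · exact h1
      · exact absurd h1 (hall _)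
    let σ' := Function.update σ j0 b
    have hW1 : (W σ').det = - (W σ).det := by
      have h1 : W σ' = (W σ).updateCol j0 (fun k => ∑ j, (fun _ => (-1 : F[X])) j • (W σ) k j) := by
        refine Matrix.ext fun k j => ?_
        by_cases hj : j = j0
        · subst hj
          rw [Matrix.updateCol_self]
          have h2 := congrArg ((tw B 0) ^ (k : ℕ)) hsum
          rw [map_sum, map_zero, Fin.sum_univ_succAbove _ b] at h2
          simp only [W, Matrix.of_apply, σ', Function.update_self, g, hσ]
          simp only [smul_eq_mul, neg_one_mul, Finset.sum_neg_distrib]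
          linear_combination h2
        · rw [Matrix.updateCol_ne hj]
          simp [W, σ', hj]
      rw [h1, Matrix.det_updateCol_sum]
      simp
    have hprod : (∏ j, fp β m (e (σ' j))) * fp β m (e a) = (∏ j, fp β m (e (σ j))) * fp β m (e b) := by
      rw [← Finset.mul_prod_erase _ _ (Finset.mem_univ j0),
        ← Finset.mul_prod_erase _ (fun j => fp β m (e (σ j))) (Finset.mem_univ j0)]
      have : ∏ x ∈ Finset.univ.erase j0, fp β m (e (σ' x)) = ∏ x ∈ Finset.univ.erase j0, fp β m (e (σ x)) := by
        refine Finset.prod_congr rfl fun x hx => ?_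
        have hx' : x ≠ j0 := by simpa using hx
        simp [σ', hx']
      rw [this]
      simp only [σ', Function.update_self, hj0]
      ring
    have hP0 : (∏ j, fp β m (e (σ j))) ≠ 0 := Finset.prod_ne_zero_iff.mpr fun _ _ => fp_ne_zero _ _ _
    have hrel : fp β m (e b) * (R σ').det = fp β m (e a) * (-(R σ).det) := by
      rw [hWR, hWR] at hW1
      apply mul_left_cancel₀ hP0
      linear_combination fp β m (e a) * hW1 - (R σ').det * hprod
    have hR0 : (R σ).det ≠ 0 := by
      intro h0; apply hW0; rw [hWR, h0, mul_zero]
    have hR1 : (R σ').det ≠ 0 := by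
      intro h0
      rw [h0, mul_zero] at hrel
      exact mul_ne_zero (fp_ne_zero _ _ _) (neg_ne_zero.mpr hR0) hrel.symm
    have hmult := congrArg (rootMultiplicity (-β i)) hrel
    rw [rootMultiplicity_mul (mul_ne_zero (fp_ne_zero _ _ _) hR1),
      rootMultiplicity_mul (mul_ne_zero (fp_ne_zero _ _ _) (neg_ne_zero.mpr hR0)),
      rootMult_fp_of_mem β hβ, rootMult_fp_of_mem β hβ, if_pos hia, if_neg hib, zero_add] at hmult
    have b0 := (hRC σ).neg.rootMult (p := p) (neg_ne_zero.mpr hR0) (-β i)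
    have b1 := (hRC σ').rootMult (p := p) hR1 (-β i)
    rw [Fin.sum_univ_eq_sum_range (fun k => D + k * h)] at b0 b1
    have hm2 : (m + rootMultiplicity (-β i) (-(R σ).det)) % p =
        m + rootMultiplicity (-β i) (-(R σ).det) % p := by
      rw [Nat.add_mod, Nat.mod_eq_of_lt (by omega : m < p), Nat.mod_eq_of_lt (by omega)]
    rw [hmult, hm2] at b1
    omega

end indep
end QQ

namespace QQ

open Polynomial

section bound

lemma degree_tw_lt {F : Type*} [Field F] {B L P : F[X]} {n h : ℕ} (hB : B.natDegree ≤ h) (hL : L.natDegree ≤ h)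
    (hP : P.degree < n) : (tw B L P).degree < (n + h : ℕ) := by
  by_cases h0 : P = 0
  · subst h0
    simp only [map_zero, degree_zero]
    exact WithBot.bot_lt_coe _
  · have h1 : P.natDegree < n := (natDegree_lt_iff_degree_lt h0).mpr hP
    refine lt_of_le_of_lt degree_le_natDegree ?_
    have : (tw B L P).natDegree < n + h := by
      rw [tw_apply]
      refine lt_of_le_of_lt (natDegree_add_le _ _) (max_lt ?_ ?_)
      · refine lt_of_le_of_lt natDegree_mul_le ?_
        have := natDegree_derivative_le P
        omega
      · refine lt_of_le_of_lt natDegree_mul_le ?_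
        omega
    exact_mod_cast this

lemma degree_tw_pow_lt {F : Type*} [Field F] {B L P : F[X]} {n h : ℕ} (hB : B.natDegree ≤ h) (hL : L.natDegree ≤ h)
    (hP : P.degree < n) (k : ℕ) : ((tw B L ^ k) P).degree < (n + k * h : ℕ) := by
  induction k with
  | zero => simpa using hP
  | succ k ih =>
    rw [pow_succ', Module.End.mul_apply, Nat.succ_mul, ← add_assoc]
    exact degree_tw_lt hB hL ih

lemma eval_tw_pow {F : Type*} [Field F] (B G : F[X]) (a : F) (k : ℕ) :
    ((tw B 0 ^ k) ((X - C a) ^ k * G)).eval a = (k.factorial : F) * B.eval a ^ k * G.eval a := by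
  induction k generalizing G with
  | zero => simp
  | succ k ih =>
    have : tw B 0 ((X - C a) ^ (k + 1) * G) =
        (X - C a) ^ k * (B * (((k + 1 : ℕ) : F[X]) * G + (X - C a) * derivative G)) := by
      rw [tw_apply, derivative_mul, derivative_X_sub_C_pow]
      simp
      ring
    rw [pow_succ, Module.End.mul_apply, this, ih, Nat.factorial_succ]
    simp
    ring

lemma dvd_of_tw {p : ℕ} [hp : Fact p.Prime] (B G : (ZMod p)[X]) (a : ZMod p) (hB : B.eval a ≠ 0)
    (M : ℕ) (hM : M ≤ p) (h : ∀ k < M, ((tw B 0 ^ k) G).eval a = 0) : (X - C a) ^ M ∣ G := by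
  induction M with
  | zero => simp
  | succ M ih =>
    obtain ⟨H, rfl⟩ := ih (by omega) (fun k hk => h k (by omega))
    have h1 := h M (by omega)
    rw [eval_tw_pow] at h1
    have hf : ((M.factorial : ℕ) : ZMod p) ≠ 0 := by
      rw [Ne, ZMod.natCast_eq_zero_iff, hp.out.dvd_factorial]
      omega
    have h2 : H.eval a = 0 := by
      rcases mul_eq_zero.mp h1 with h3 | h3
      · exact absurd h3 (mul_ne_zero hf (pow_ne_zero _ hB))
      · exact h3
    obtain ⟨K, rfl⟩ := dvd_iff_isRoot.mpr h2
    exact ⟨K, by ring⟩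

lemma finrank_degLT {F : Type*} [Field F] (n : ℕ) : Module.finrank F (degreeLT F n) = n := by
  rw [(degreeLTEquiv F n).finrank_eq]; simp

/-- uniqueness of base `X^p` expansion -/
lemma expansion_unique {F : Type*} [Field F] {p D J : ℕ} (hD : D ≤ p) (P : Fin J → F[X])
    (hP : ∀ j, (P j).degree < D) (h0 : ∑ j : Fin J, P j * X ^ ((j : ℕ) * p) = 0) : ∀ j, P j = 0 := by
  intro j
  ext i
  rw [coeff_zero]
  by_cases hi : i < D
  · have h1 := congrArg (fun R => coeff R (i + j * p)) h0
    simp only [finsetSum_coeff, coeff_zero] at h1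
    rw [Finset.sum_eq_single j] at h1
    · rwa [coeff_mul_X_pow] at h1
    · intro b _ hb
      rw [coeff_mul_X_pow']
      split_ifs with hle
      · apply coeff_eq_zero_of_degree_lt
        refine lt_of_lt_of_le (hP b) ?_
        have hbj : (b : ℕ) ≠ j := fun h => hb (Fin.ext h)
        have hlt : (b : ℕ) < j := by
          by_contra hcon
          have : (j : ℕ) + 1 ≤ b := by omega
          have := Nat.mul_le_mul_right p this
          rw [Nat.succ_mul] at this
          omega
        have : (b : ℕ) + 1 ≤ j := hlt
        have := Nat.mul_le_mul_right p this
        rw [Nat.succ_mul] at this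
        have : D ≤ i + j * p - b * p := by omega
        exact_mod_cast this
      · rfl
    · simp
  · apply coeff_eq_zero_of_degree_lt
    refine lt_of_lt_of_le (hP j) ?_
    have : D ≤ i := by omega
    exact_mod_cast this

theorem stepanov {p : ℕ} [hp : Fact p.Prime] {h : ℕ} (β : Fin h → ZMod p)
    (hβ : Function.Injective β) (m D J M T : ℕ) (hm : 2 * m < p) (hm0 : 0 < m) (hT : T ≤ 2 ^ h)
    (hN : ∑ k ∈ Finset.range T, (D + k * h) < m)
    (hcount : ∑ k ∈ Finset.range M, (D + J + k * h) < T * J * D)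
    (hD : D ≤ p) (hM : M ≤ p) (A : Finset (ZMod p)) (hA : ∀ a ∈ A, ∀ i, (a + β i) ^ m = 1) :
    M * A.card ≤ D + (J - 1) * p + h * m := by
  classical
  obtain ⟨⟨e, he⟩⟩ : Nonempty (Fin T ↪ Finset (Fin h)) :=
    Function.Embedding.nonempty_of_card_le (by simpa using hT)
  choose L hL1 hL2 using fun e => exists_logder β m e
  set B := bp β with hBdef
  have hBd : B.natDegree ≤ h := (natDegree_bp β).le
  let V := Fin T × Fin J → degreeLT (ZMod p) D
  let Φ0 : ℕ → V →ₗ[ZMod p] (ZMod p)[X] := fun k =>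
    ∑ tj : Fin T × Fin J, (LinearMap.mulRight (ZMod p) ((X : (ZMod p)[X]) ^ (tj.2 : ℕ))) ∘ₗ
      (tw B (L (e tj.1)) ^ k) ∘ₗ (degreeLT (ZMod p) D).subtype ∘ₗ LinearMap.proj tj
  have hΦ0 : ∀ k P, Φ0 k P = ∑ tj : Fin T × Fin J,
      (tw B (L (e tj.1)) ^ k) (P tj : (ZMod p)[X]) * X ^ (tj.2 : ℕ) := by
    intro k P
    simp [Φ0]
    rfl
  have hmem : ∀ k P, Φ0 k P ∈ degreeLT (ZMod p) (D + J + k * h) := by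
    intro k P
    rw [hΦ0]
    refine Submodule.sum_mem _ fun tj _ => ?_
    rw [mem_degreeLT]
    by_cases h0 : (tw B (L (e tj.1)) ^ k) (P tj : (ZMod p)[X]) = 0
    · rw [h0, zero_mul, degree_zero]; exact WithBot.bot_lt_coe _
    · have h1 := degree_tw_pow_lt hBd (hL1 (e tj.1)) (mem_degreeLT.mp (P tj).2) k
      have h2 := (natDegree_lt_iff_degree_lt h0).mpr h1
      refine lt_of_le_of_lt degree_le_natDegree ?_
      have h3 : (((tw B (L (e tj.1)) ^ k) (P tj : (ZMod p)[X])) * X ^ (tj.2 : ℕ)).natDegree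
          < D + J + k * h := by
        refine lt_of_le_of_lt natDegree_mul_le ?_
        rw [natDegree_X_pow]
        have := tj.2.2
        omega
      exact_mod_cast h3
  let Φ : V →ₗ[ZMod p] (∀ k : Fin M, degreeLT (ZMod p) (D + J + k * h)) :=
    LinearMap.pi fun k => LinearMap.codRestrict _ (Φ0 k) (hmem k)
  have hker : LinearMap.ker Φ ≠ ⊥ := by
    apply LinearMap.ker_ne_bot_of_finrank_lt
    rw [Module.finrank_pi_fintype, Module.finrank_pi_fintype]
    simp only [finrank_degLT]
    rw [Fin.sum_univ_eq_sum_range (fun k => D + J + k * h)]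
    simpa using hcount
  obtain ⟨P, hPk, hP0⟩ := Submodule.exists_mem_ne_zero_of_ne_bot hker
  have hPk' : ∀ k < M, ∑ tj : Fin T × Fin J,
      (tw B (L (e tj.1)) ^ k) (P tj : (ZMod p)[X]) * X ^ (tj.2 : ℕ) = 0 := by
    intro k hk
    have h1 := congrFun (LinearMap.mem_ker.mp hPk) ⟨k, hk⟩
    have h2 := congrArg Subtype.val h1
    rw [← hΦ0]
    simpa [Φ] using h2
  have hconst : ∀ j : ℕ, derivative ((X : (ZMod p)[X]) ^ (j * p)) = 0 := by
    intro j
    rw [derivative_X_pow]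
    simp
  let G : (ZMod p)[X] := ∑ t : Fin T, (∑ j : Fin J, (P (t, j) : (ZMod p)[X]) * X ^ ((j : ℕ) * p)) *
    fp β m (e t)
  have hG0 : G ≠ 0 := by
    intro hG
    have h1 := indep (p := p) β hβ m D hm T hN e he
      (fun t => ∑ j : Fin J, (P (t, j) : (ZMod p)[X]) * X ^ ((j : ℕ) * p))
      (fun t => Cl.sum _ _ fun j _ => by
        have ha : Cl D (P (t, j) : (ZMod p)[X]) := by
          apply Cl.of_natDegree
          rw [natDegree_le_iff_degree_le]
          exact (mem_degreeLT.mp (P (t, j)).2).le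
        simpa using ha.mul (Cl.of_const (hconst j))) hG
    apply hP0
    funext tj
    have h2 := expansion_unique hD (fun j => (P (tj.1, j) : (ZMod p)[X]))
      (fun j => mem_degreeLT.mp (P (tj.1, j)).2) (h1 tj.1) tj.2
    exact Subtype.ext h2
  have hGk : ∀ k, (tw B 0 ^ k) G = ∑ tj : Fin T × Fin J,
      (tw B (L (e tj.1)) ^ k) (P tj : (ZMod p)[X]) * X ^ ((tj.2 : ℕ) * p) * fp β m (e tj.1) := by
    intro k
    rw [map_sum, Fintype.sum_prod_type]
    refine Finset.sum_congr rfl fun t _ => ?_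
    rw [Finset.sum_mul, map_sum]
    refine Finset.sum_congr rfl fun j _ => ?_
    rw [tw_pow_mul B _ _ _ (hL2 (e t)), tw_pow_const _ _ _ _ (hconst j)]
  have hdvd : ∀ a ∈ A, (X - C a) ^ M ∣ G := by
    intro a ha
    have hne : ∀ i, a + β i ≠ 0 := by
      intro i h0
      have := hA a ha i
      rw [h0, zero_pow hm0.ne'] at this
      exact zero_ne_one this
    apply dvd_of_tw B G a _ M hM
    · intro k hk
      rw [hGk]
      have h1 := congrArg (eval a) (hPk' k hk)
      rw [eval_finsetSum] at h1 ⊢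
      rw [eval_zero] at h1
      rw [← h1]
      refine Finset.sum_congr rfl fun tj _ => ?_
      have hf : (fp β m (e tj.1)).eval a = 1 := by
        rw [fp, eval_prod]
        exact Finset.prod_eq_one fun i _ => by simpa using hA a ha i
      simp only [eval_mul, eval_pow, eval_X, hf, mul_one]
      rw [mul_comm (tj.2 : ℕ) p, pow_mul, ZMod.pow_card]
    · rw [hBdef, bp, eval_prod, Finset.prod_ne_zero_iff]
      intro i _
      simpa using hne i
  have hprod : ∏ a ∈ A, (X - C a) ^ M ∣ G := by
    refine Finset.prod_dvd_of_coprime ?_ hdvd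
    intro a _ b _ hab
    exact (isCoprime_X_sub_C_of_isUnit_sub (sub_ne_zero.mpr hab).isUnit).pow
  have hdeg := natDegree_le_of_dvd hprod hG0
  rw [natDegree_prod _ _ (fun a _ => pow_ne_zero _ (X_sub_C_ne_zero a))] at hdeg
  simp only [natDegree_pow, natDegree_X_sub_C, mul_one, Finset.sum_const, smul_eq_mul] at hdeg
  rw [mul_comm]
  refine hdeg.trans ?_
  refine natDegree_sum_le_of_forall_le _ _ fun t _ => ?_
  refine natDegree_mul_le.trans ?_
  refine Nat.add_le_add ?_ (natDegree_fp _ _ _)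
  refine natDegree_sum_le_of_forall_le _ _ fun j _ => ?_
  refine natDegree_mul_le.trans ?_
  rw [natDegree_X_pow]
  refine Nat.add_le_add ?_ (Nat.mul_le_mul_right _ (by have := j.2; omega))
  rw [natDegree_le_iff_degree_le]
  exact (mem_degreeLT.mp (P (t, j)).2).le

end bound
end QQ

namespace QQ

section count

lemma card_mult (Y g : ℕ) : ((Finset.Ioc 0 Y).filter (g ∣ ·)).card = Y / g :=
  Nat.Ioc_filter_dvd_card_eq_div Y g

lemma sum_odd_sq (K : ℕ) :
    ∑ k ∈ Finset.range K, (1 : ℝ) / (2 * (k : ℝ) + 3) ^ 2 ≤ 1 / 4 * (1 - 1 / ((K : ℝ) + 1)) := by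
  induction K with
  | zero => simp
  | succ K ih =>
    rw [Finset.sum_range_succ]
    have h1 : (1 : ℝ) / (2 * (K : ℝ) + 3) ^ 2 ≤ 1 / 4 * (1 / ((K : ℝ) + 1) - 1 / ((K : ℝ) + 2)) := by
      have : 1 / 4 * (1 / ((K : ℝ) + 1) - 1 / ((K : ℝ) + 2)) = 1 / (4 * (((K : ℝ) + 1) * (K + 2))) := by
        field_simp
        ring
      rw [this]
      apply one_div_le_one_div_of_le
      · positivity
      · nlinarith
    push_cast
    have : (K : ℝ) + 1 + 1 = K + 2 := by ring
    rw [this]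
    linarith

lemma noncoprime_card (X Y : ℕ) :
    ((((Finset.Ioc 0 X) ×ˢ (Finset.Ioc 0 Y)).filter (fun t => ¬ Nat.Coprime t.1 t.2)).card : ℝ)
      ≤ (X : ℝ) * Y / 2 := by
  classical
  let S : ℕ → Finset (ℕ × ℕ) := fun g =>
    ((Finset.Ioc 0 X).filter (g ∣ ·)) ×ˢ ((Finset.Ioc 0 Y).filter (g ∣ ·))
  have hS : ∀ g : ℕ, 0 < g → ((S g).card : ℝ) ≤ (X : ℝ) * Y * (1 / (g : ℝ) ^ 2) := by
    intro g hg
    simp only [S, Finset.card_product, card_mult]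
    push_cast
    have h1 : ((X / g : ℕ) : ℝ) ≤ (X : ℝ) / g := Nat.cast_div_le
    have h2 : ((Y / g : ℕ) : ℝ) ≤ (Y : ℝ) / g := Nat.cast_div_le
    calc _ ≤ (X : ℝ) / g * (Y / g) := by gcongr
      _ = _ := by field_simp
  have hsub : (((Finset.Ioc 0 X) ×ˢ (Finset.Ioc 0 Y)).filter (fun t => ¬ Nat.Coprime t.1 t.2)) ⊆
      S 2 ∪ (Finset.range X).biUnion (fun k => S (2 * k + 3)) := by
    rintro ⟨b, n⟩ ht
    simp only [Finset.mem_filter, Finset.mem_product, Finset.mem_Ioc] at ht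
    obtain ⟨⟨⟨hb0, hbX⟩, hn0, hnY⟩, hc⟩ := ht
    obtain ⟨q, hq, hqb, hqn⟩ := Nat.Prime.not_coprime_iff_dvd.mp hc
    simp only [Finset.mem_union, Finset.mem_biUnion, Finset.mem_range, S, Finset.mem_product,
      Finset.mem_filter, Finset.mem_Ioc]
    rcases hq.eq_two_or_odd' with rfl | hodd
    · left; exact ⟨⟨⟨hb0, hbX⟩, hqb⟩, ⟨hn0, hnY⟩, hqn⟩
    · right
      obtain ⟨k, hk⟩ := hodd
      have := hq.two_le
      have hqX := (Nat.le_of_dvd hb0 hqb).trans hbX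
      have hq3 : 2 * (k - 1) + 3 = q := by omega
      refine ⟨k - 1, by omega, ?_⟩
      rw [hq3]
      exact ⟨⟨⟨hb0, hbX⟩, hqb⟩, ⟨hn0, hnY⟩, hqn⟩
  have h1 := Finset.card_le_card hsub
  have h2 := Finset.card_union_le (S 2) ((Finset.range X).biUnion (fun k => S (2 * k + 3)))
  have h3 := Finset.card_biUnion_le (s := Finset.range X) (t := fun k => S (2 * k + 3))
  have h4 : ((((Finset.Ioc 0 X) ×ˢ (Finset.Ioc 0 Y)).filter (fun t => ¬ Nat.Coprime t.1 t.2)).card : ℝ)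
      ≤ (S 2).card + ∑ k ∈ Finset.range X, ((S (2 * k + 3)).card : ℝ) := by
    exact_mod_cast (h1.trans h2).trans (Nat.add_le_add_left h3 _)
  have h5 : ∑ k ∈ Finset.range X, ((S (2 * k + 3)).card : ℝ) ≤
      (X : ℝ) * Y * ∑ k ∈ Finset.range X, (1 : ℝ) / (2 * (k : ℝ) + 3) ^ 2 := by
    rw [Finset.mul_sum]
    refine Finset.sum_le_sum fun k _ => ?_
    have := hS (2 * k + 3) (by omega)
    push_cast at this
    exact this
  have h6 := sum_odd_sq X
  have h7 := hS 2 (by norm_num)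
  have h8 : (0 : ℝ) ≤ 1 / ((X : ℝ) + 1) := by positivity
  have h9 : (0 : ℝ) ≤ (X : ℝ) * Y := by positivity
  have h10 : (X : ℝ) * Y * ∑ k ∈ Finset.range X, (1 : ℝ) / (2 * (k : ℝ) + 3) ^ 2 ≤ (X : ℝ) * Y * (1 / 4) :=
    mul_le_mul_of_nonneg_left (by linarith) h9
  push_cast at h7
  linarith

lemma card_shift (Y q c : ℕ) (hq : 0 < q) :
    ((Finset.Ioc 0 Y).filter (fun n => q ∣ n + c)).card ≤ Y / q + 1 := by
  have h1 : ((Finset.Ioc 0 Y).filter (fun n => q ∣ n + c)).card ≤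
      (Finset.Ioc (c / q) ((Y + c) / q)).card := by
    apply Finset.card_le_card_of_injOn (fun n => (n + c) / q)
    · intro n hn
      simp only [Finset.coe_filter, Finset.mem_Ioc, Set.mem_ofPred_eq] at hn
      obtain ⟨⟨hn0, hnY⟩, k, hk⟩ := hn
      simp only [Finset.coe_Ioc, Set.mem_Ioc]
      refine ⟨?_, Nat.div_le_div_right (by omega)⟩
      rw [hk, Nat.mul_div_cancel_left _ hq, Nat.div_lt_iff_lt_mul hq, mul_comm]
      omega
    · intro n hn n' hn' h
      simp only [Finset.coe_filter, Finset.mem_Ioc, Set.mem_ofPred_eq] at hn hn'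
      have a1 := Nat.div_mul_cancel hn.2
      have a2 := Nat.div_mul_cancel hn'.2
      simp only at h
      rw [h] at a1
      omega
  rw [Nat.card_Ioc] at h1
  have h2 : (Y + c) / q ≤ Y / q + c / q + 1 := by
    rw [Nat.add_div hq]
    split_ifs <;> simp
  refine h1.trans ?_
  rw [Nat.sub_le_iff_le_add]
  linarith

/-- the lower bound for the number of good pairs -/
lemma good_pairs (X Y q h : ℕ) (hq : 0 < q) :
    (X : ℝ) * Y * (1 / 2 - (h + 1) / q) - X * h ≤
    ((((Finset.Ioc 0 X) ×ˢ (Finset.Ioc 0 Y)).filter (fun t => Nat.Coprime t.1 t.2 ∧ ¬ q ∣ t.1 ∧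
      ∀ i < h, ¬ q ∣ t.2 + t.1 * i)).card : ℝ) := by
  classical
  set P := (Finset.Ioc 0 X) ×ˢ (Finset.Ioc 0 Y) with hP
  set G := P.filter (fun t => Nat.Coprime t.1 t.2 ∧ ¬ q ∣ t.1 ∧ ∀ i < h, ¬ q ∣ t.2 + t.1 * i) with hG
  let B1 := P.filter (fun t => ¬ Nat.Coprime t.1 t.2)
  let B2 := ((Finset.Ioc 0 X).filter (q ∣ ·)) ×ˢ (Finset.Ioc 0 Y)
  let B3 : Finset (ℕ × ℕ) := (Finset.Ioc 0 X).biUnion fun b => (Finset.range h).biUnion fun i =>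
    ({b} : Finset ℕ) ×ˢ ((Finset.Ioc 0 Y).filter (fun n => q ∣ n + b * i))
  have hsub : P ⊆ G ∪ (B1 ∪ (B2 ∪ B3)) := by
    rintro ⟨b, n⟩ ht
    simp only [hP, Finset.mem_product, Finset.mem_Ioc] at ht
    simp only [hG, hP, B1, B2, B3, Finset.mem_union, Finset.mem_filter, Finset.mem_product,
      Finset.mem_Ioc, Finset.mem_biUnion, Finset.mem_range, Finset.mem_singleton]
    by_cases h1 : Nat.Coprime b n
    · by_cases h2 : q ∣ b
      · right; right; left; exact ⟨⟨ht.1, h2⟩, ht.2⟩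
      · by_cases h3 : ∀ i < h, ¬ q ∣ n + b * i
        · left; exact ⟨ht, h1, h2, h3⟩
        · push Not at h3
          obtain ⟨i, hi, hd⟩ := h3
          right; right; right
          exact ⟨b, ht.1, i, hi, rfl, ht.2, hd⟩
    · right; left; exact ⟨ht, h1⟩
  have c0 := Finset.card_le_card hsub
  have c1 := Finset.card_union_le G (B1 ∪ (B2 ∪ B3))
  have c2 := Finset.card_union_le B1 (B2 ∪ B3)
  have c3 := Finset.card_union_le B2 B3
  have cP : P.card = X * Y := by simp [hP]
  have cB2 : B2.card = X / q * Y := by simp [B2, card_mult]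
  have cB3 : B3.card ≤ X * (h * (Y / q + 1)) := by
    refine Finset.card_biUnion_le.trans ?_
    refine (Finset.sum_le_card_nsmul _ _ (h * (Y / q + 1)) ?_).trans (by simp)
    intro b _
    refine Finset.card_biUnion_le.trans ?_
    refine (Finset.sum_le_card_nsmul _ _ (Y / q + 1) ?_).trans (by simp)
    intro i _
    rw [Finset.card_product, Finset.card_singleton, one_mul]
    exact card_shift Y q _ hq
  have cB1 : (B1.card : ℝ) ≤ (X : ℝ) * Y / 2 := noncoprime_card X Y
  have tot : ((X * Y : ℕ) : ℝ) ≤ G.card + (B1.card + (((X / q * Y : ℕ) : ℝ) + ((X * (h * (Y / q + 1)) : ℕ) : ℝ))) := by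
    have : X * Y ≤ G.card + (B1.card + (X / q * Y + X * (h * (Y / q + 1)))) := by
      rw [← cP]; omega
    exact_mod_cast this
  push_cast at tot
  have h1 : ((X / q : ℕ) : ℝ) ≤ (X : ℝ) / q := Nat.cast_div_le
  have h2 : ((Y / q : ℕ) : ℝ) ≤ (Y : ℝ) / q := Nat.cast_div_le
  have h3 : ((X / q : ℕ) : ℝ) * Y ≤ (X : ℝ) / q * Y := by gcongr
  have h4 : (X : ℝ) * (h * (((Y / q : ℕ) : ℝ) + 1)) ≤ X * (h * ((Y : ℝ) / q + 1)) := by gcongr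
  have h5 : (X : ℝ) * Y * (1 / 2 - (h + 1) / q) - X * h =
      X * Y - (X : ℝ) * Y / 2 - (X : ℝ) / q * Y - X * (h * ((Y : ℝ) / q + 1)) := by ring
  rw [h5]
  linarith

end count

section numeric

lemma two_pow_big (h : ℕ) (hh : 29 ≤ h) : 100000 * h ^ 2 ≤ 2 ^ h := by
  induction h, hh using Nat.le_induction with
  | base => norm_num
  | succ n hn ih => rw [pow_succ 2 n]; nlinarith

theorem upper {p : ℕ} [hp : Fact p.Prime] (h s m : ℕ) (hh : 29 ≤ h) (hs1 : 2 ^ h ≤ s) (hs2 : s < 2 ^ (h + 1))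
    (hsp : s ^ 2 ≤ p) (hps : p < (s + 1) ^ 2) (hm : 2 * m < p) (hm3 : p ≤ 3 * m + 1)
    (β : Fin h → ZMod p) (hβ : Function.Injective β)
    (A : Finset (ZMod p)) (hA : ∀ a ∈ A, ∀ i, (a + β i) ^ m = 1) : 5 * A.card < 16 * h * s := by
  have hbig := two_pow_big h hh
  have hsb : 100000 * h ^ 2 ≤ s := hbig.trans hs1
  obtain ⟨U, hU⟩ : ∃ U, U = s / (4 * h) := ⟨_, rfl⟩
  have hU1 : 4 * h * U ≤ s := by rw [hU]; exact Nat.mul_div_le _ _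
  have hU2 : s < 4 * h * U + 4 * h := by
    rw [hU]
    have := Nat.lt_mul_div_succ s (by omega : 0 < 4 * h)
    linarith
  have hU0 : 1 ≤ U := by
    by_contra hcon
    have : U = 0 := by omega
    subst this
    nlinarith
  have hsum : ∀ a n : ℕ, 2 * ∑ k ∈ Finset.range n, (a + k * h) ≤ 2 * n * a + h * n ^ 2 := by
    intro a n
    induction n with
    | zero => simp
    | succ n ih => rw [Finset.sum_range_succ]; nlinarith
  have hT : 4 * U ≤ 2 ^ h := by
    rw [pow_succ] at hs2
    by_contra hcon
    push Not at hcon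
    nlinarith
  have hw2 : (4 * h * U) ^ 2 ≤ s ^ 2 := Nat.pow_le_pow_left hU1 2
  have hsh : 2900000 * h ≤ s := by nlinarith
  have hss : 84100000 * s ≤ s ^ 2 := by nlinarith
  have hN : ∑ k ∈ Finset.range (4 * U), (U * h ^ 2 + 2 * h + k * h) < m := by
    have h1 := hsum (U * h ^ 2 + 2 * h) (4 * U)
    have h2 : 2 * (4 * U) * (U * h ^ 2 + 2 * h) + h * (4 * U) ^ 2 =
      8 * (U ^ 2 * h ^ 2) + 16 * (h * U) + 16 * (h * U ^ 2) := by ring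
    have h3 : 29 * (h * U ^ 2) ≤ U ^ 2 * h ^ 2 := by
      have : U ^ 2 * h ^ 2 = h * (h * U ^ 2) := by ring
      rw [this]
      exact Nat.mul_le_mul_right _ hh
    have h4 : 16 * (U ^ 2 * h ^ 2) ≤ s ^ 2 := by
      calc _ = (4 * h * U) ^ 2 := by ring
        _ ≤ _ := hw2
    have h5 : 4 * (h * U) ≤ s := by linarith
    omega
  have hcount : ∑ k ∈ Finset.range (2 * U * h), (U * h ^ 2 + 2 * h + h + k * h) <
      4 * U * h * (U * h ^ 2 + 2 * h) := by
    have h1 := hsum (U * h ^ 2 + 2 * h + h) (2 * U * h)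
    have h2 : 2 * (2 * U * h) * (U * h ^ 2 + 2 * h + h) + h * (2 * U * h) ^ 2 =
      8 * (U ^ 2 * h ^ 3) + 12 * (U * h ^ 2) := by ring
    have h3 : 4 * U * h * (U * h ^ 2 + 2 * h) = 4 * (U ^ 2 * h ^ 3) + 8 * (U * h ^ 2) := by ring
    have h4 : 1 ≤ U * h ^ 2 := Nat.mul_pos hU0 (by positivity)
    omega
  have hUh2 : 4 * (U * h ^ 2) ≤ h * s := by nlinarith
  have hhs : h * s * 2900000 ≤ s ^ 2 := by nlinarith
  have hD : U * h ^ 2 + 2 * h ≤ p := by omega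
  have hM : 2 * U * h ≤ p := by nlinarith
  have key := stepanov β hβ m (U * h ^ 2 + 2 * h) h (2 * U * h) (4 * U) hm (by omega) hT hN hcount hD hM A hA
  by_contra hcon
  push Not at hcon
  have k1 : 4 * U * A.card * h ≤ 3 * p * h := by
    obtain ⟨g, rfl⟩ : ∃ g, h = g + 1 := ⟨h - 1, by omega⟩
    simp only [add_tsub_cancel_right] at key
    have e1 : (g + 1) * (2 * m) ≤ (g + 1) * p := Nat.mul_le_mul_left _ hm.le
    have e2 : 2 * (U * (g + 1) ^ 2) + 4 * (g + 1) ≤ 2 * p := by omega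
    calc 4 * U * A.card * (g + 1) = 2 * (2 * U * (g + 1) * A.card) := by ring
      _ ≤ 2 * ((U * (g + 1) ^ 2 + 2 * (g + 1)) + g * p + (g + 1) * m) :=
          Nat.mul_le_mul_left _ key
      _ = (2 * (U * (g + 1) ^ 2) + 4 * (g + 1)) + 2 * (g * p) + (g + 1) * (2 * m) := by ring
      _ ≤ 2 * p + 2 * (g * p) + (g + 1) * p := by gcongr
      _ = 3 * p * (g + 1) := by ring
  have k2 : 4 * U * A.card ≤ 3 * p := Nat.le_of_mul_le_mul_right k1 (by omega)
  have k3 : 4 * U * (16 * h * s) ≤ 15 * p := by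
    calc 4 * U * (16 * h * s) ≤ 4 * U * (5 * A.card) := Nat.mul_le_mul_left _ hcon
      _ = 5 * (4 * U * A.card) := by ring
      _ ≤ 5 * (3 * p) := Nat.mul_le_mul_left _ k2
      _ = _ := by ring
  have k4 : s * s ≤ (4 * h * U + 4 * h) * s := Nat.mul_le_mul_right _ hU2.le
  have k5 : 16 * (s * s) ≤ 4 * U * (16 * h * s) + 64 * (h * s) := by
    calc 16 * (s * s) ≤ 16 * ((4 * h * U + 4 * h) * s) := Nat.mul_le_mul_left _ k4
      _ = _ := by ring
  have k6 : (s + 1) ^ 2 = s * s + 2 * s + 1 := by ring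
  have k7 : s ^ 2 = s * s := by ring
  have k8 : 0 < s := by omega
  omega

end numeric
end QQ

namespace QQ

section chi

lemma exists_m (p : ℕ) [hp : Fact p.Prime] (χ : DirichletCharacter ℂ p) (hχ : χ ≠ 1)
    (hodd : Odd (orderOf χ)) :
    ∃ m : ℕ, 2 * m < p ∧ p ≤ 3 * m + 1 ∧ ∀ y : ZMod p, χ y = 1 → y ^ m = 1 := by
  obtain ⟨g, hg⟩ := IsCyclic.exists_generator (α := (ZMod p)ˣ)
  have hiff : ∀ n : ℕ, χ (g : ZMod p) ^ n = 1 → χ ^ n = 1 := by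
    intro n hn
    ext a
    obtain ⟨k, rfl⟩ := (mem_powers_iff_mem_zpowers.mpr (hg a))
    simp only [MulChar.pow_apply_coe, MulChar.one_apply_coe, Units.val_pow_eq_pow_val, map_pow]
    rw [hn]
  have hp1 : 0 < p := hp.out.pos
  have hd : orderOf χ ∣ p - 1 := by
    apply orderOf_dvd_of_pow_eq_one
    apply hiff
    rw [← map_pow, ZMod.pow_card_sub_one_eq_one g.ne_zero, map_one]
  obtain ⟨e, he⟩ := hodd
  obtain ⟨f, hf⟩ := hd
  have he1 : 1 ≤ e := by
    by_contra hcon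
    have : orderOf χ = 1 := by omega
    exact hχ (orderOf_eq_one_iff.mp this)
  refine ⟨e * f, ?_, ?_, ?_⟩
  · rw [he] at hf
    have : (2 * e + 1) * f = 2 * (e * f) + f := by ring
    omega
  · rw [he] at hf
    have h1 : (2 * e + 1) * f = 2 * (e * f) + f := by ring
    have h2 : 1 * f ≤ e * f := Nat.mul_le_mul_right _ he1
    omega
  · intro y hy
    have hy0 : y ≠ 0 := by
      rintro rfl
      rw [MulChar.map_zero] at hy
      exact zero_ne_one hy
    obtain ⟨k, hk⟩ := (mem_powers_iff_mem_zpowers.mpr (hg (Units.mk0 y hy0)))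
    have hk' : (g : ZMod p) ^ k = y := by
      have := congrArg (fun u : (ZMod p)ˣ => (u : ZMod p)) hk
      simpa using this
    rw [← hk', map_pow] at hy
    obtain ⟨j, hj⟩ := orderOf_dvd_of_pow_eq_one (hiff k hy)
    rw [← hk', ← pow_mul, hj]
    have : orderOf χ * j * (e * f) = (p - 1) * (j * e) := by rw [hf]; ring
    rw [this, pow_mul, ZMod.pow_card_sub_one_eq_one g.ne_zero, one_pow]

lemma chi_one (p : ℕ) [hp : Fact p.Prime] (χ : DirichletCharacter ℂ p) (q₁ q₂ : ℕ)
    (hmin₂ : ∀ q : ℕ, q.Prime → χ (q : ZMod p) ∉ ({0, 1} : Set ℂ) → q ≠ q₁ → q₂ ≤ q)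
    (n : ℕ) (h0 : 0 < n) (h2 : n < q₂) (hnp : n < p) (hn : ¬ q₁ ∣ n) : χ (n : ZMod p) = 1 := by
  induction n using Nat.strong_induction_on with
  | _ n ih =>
    by_cases h1 : n = 1
    · subst h1; simp
    · have hq := Nat.minFac_prime h1
      obtain ⟨k, hk⟩ := Nat.minFac_dvd n
      set q := n.minFac
      have hk0 : 0 < k := by
        rcases Nat.eq_zero_or_pos k with h | h
        · subst h; omega
        · exact h
      have hqn : q ≤ n := Nat.le_of_dvd h0 ⟨k, hk⟩
      have hkn : k < n := by
        rw [hk]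
        exact lt_mul_of_one_lt_left hk0 hq.one_lt
      have hχk := ih k hkn hk0 (by omega) (by omega)
        (fun hd => hn (hk ▸ Dvd.dvd.mul_left hd q))
      have hχq : χ (q : ZMod p) = 1 := by
        by_contra hcon
        have hq1 : q ≠ q₁ := fun h => hn (h ▸ ⟨k, hk⟩)
        have hz : χ (q : ZMod p) ≠ 0 := by
          intro hz
          have hu : IsUnit ((q : ℕ) : ZMod p) := by
            rw [ZMod.isUnit_iff_coprime]
            exact ((Nat.Prime.coprime_iff_not_dvd hp.out).mpr
              (fun h => by have := Nat.le_of_dvd hq.pos h; omega)).symm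
          exact (hu.map χ).ne_zero hz
        have := hmin₂ q hq (by simp [hcon, hz]) hq1
        omega
      rw [hk, Nat.cast_mul, map_mul, hχq, hχk, one_mul]

lemma caseI (p : ℕ) [hp : Fact p.Prime] (χ : DirichletCharacter ℂ p) (q₁ q₂ h s : ℕ)
    (hh : 29 ≤ h) (hsb : 100000 * h ^ 2 ≤ s) (hsp : s ^ 2 ≤ p)
    (hup : ∀ (β : Fin h → ZMod p), Function.Injective β → ∀ A : Finset (ZMod p),
      (∀ a ∈ A, ∀ i, χ (a + β i) = 1) → 5 * A.card < 16 * h * s)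
    (hone : ∀ n : ℕ, 0 < n → n < q₂ → n < p → ¬ q₁ ∣ n → χ (n : ZMod p) = 1)
    (hq1 : 2 ≤ q₁) (hq : q₁ < 6 * h) (hqq : 46 * h ^ 2 * s ≤ q₁ * q₂) : False := by
  have hsh : 2900000 * h ≤ s := by nlinarith
  have hpb : 7 * h * s < p := by nlinarith
  have hq2 : 7 * h * s < q₂ := by
    by_contra hcon
    push Not at hcon
    have h1 : q₁ * q₂ ≤ 6 * h * (7 * h * s) := Nat.mul_le_mul hq.le hcon
    have h2 : 0 < h ^ 2 * s := Nat.mul_pos (by positivity) (by omega)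
    have h3 : 6 * h * (7 * h * s) = 42 * (h ^ 2 * s) := by ring
    have h4 : 46 * h ^ 2 * s = 46 * (h ^ 2 * s) := by ring
    omega
  have hqh : q₁ * h ≤ s := by
    have : q₁ * h ≤ 6 * h * h := Nat.mul_le_mul_right _ hq.le
    nlinarith
  have hs29 : 29 * s ≤ h * s := Nat.mul_le_mul_right _ hh
  have hassoc : 7 * h * s = 7 * (h * s) := by ring
  have hassoc' : 16 * h * s = 16 * (h * s) := by ring
  obtain ⟨H, hH⟩ : ∃ H, H + q₁ * h = 7 * h * s := ⟨7 * h * s - q₁ * h, by omega⟩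
  set Z := (Finset.Ioc 0 H).filter (fun z => ¬ q₁ ∣ z) with hZ
  have hZc : H ≤ 2 * Z.card := by
    have h1 := Finset.card_filter_add_card_filter_not (s := Finset.Ioc 0 H) (fun z => q₁ ∣ z)
    rw [card_mult, Nat.card_Ioc] at h1
    have h2 : H / q₁ ≤ H / 2 := Nat.div_le_div_left hq1 (by norm_num)
    simp only [hZ]
    omega
  have hinj : Set.InjOn (fun n : ℕ => (n : ZMod p)) (Set.Iio p) := by
    intro a ha b hb hab
    have := (ZMod.natCast_eq_natCast_iff' a b p).mp hab
    rwa [Nat.mod_eq_of_lt ha, Nat.mod_eq_of_lt hb] at this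
  have hil : ∀ i : Fin h, q₁ * (i : ℕ) ≤ q₁ * h := fun i => Nat.mul_le_mul_left _ i.2.le
  have hβ : Function.Injective (fun i : Fin h => ((q₁ * (i : ℕ) : ℕ) : ZMod p)) := by
    intro i j hij
    have := hinj (show q₁ * (i : ℕ) < p by have := hil i; omega)
      (show q₁ * (j : ℕ) < p by have := hil j; omega) hij
    exact Fin.ext (Nat.eq_of_mul_eq_mul_left (by omega) this)
  have := hup _ hβ (Z.image (fun n : ℕ => (n : ZMod p))) ?_
  · rw [Finset.card_image_of_injOn] at this
    · omega
    · apply hinj.mono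
      intro z hz
      simp only [hZ, Finset.coe_filter, Finset.mem_Ioc, Set.mem_ofPred_eq] at hz
      simp only [Set.mem_Iio]
      omega
  · intro a ha i
    obtain ⟨z, hz, rfl⟩ := Finset.mem_image.mp ha
    simp only [hZ, Finset.mem_filter, Finset.mem_Ioc] at hz
    have := hil i
    rw [← Nat.cast_add]
    apply hone _ (by omega) (by omega) (by omega)
    rw [Nat.dvd_add_left (Dvd.intro _ rfl)]
    exact hz.2

lemma caseII (p : ℕ) [hp : Fact p.Prime] (χ : DirichletCharacter ℂ p) (q₁ q₂ h s : ℕ)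
    (hh : 29 ≤ h) (hsb : 100000 * h ^ 2 ≤ s) (hsp : s ^ 2 ≤ p)
    (hup : ∀ (β : Fin h → ZMod p), Function.Injective β → ∀ A : Finset (ZMod p),
      (∀ a ∈ A, ∀ i, χ (a + β i) = 1) → 5 * A.card < 16 * h * s)
    (hone : ∀ n : ℕ, 0 < n → n < q₂ → n < p → ¬ q₁ ∣ n → χ (n : ZMod p) = 1)
    (hlt : q₁ < q₂) (hq : 6 * h ≤ q₁) (hqq : 46 * h ^ 2 * s ≤ q₁ * q₂) : False := by
  have hsh : 2900000 * h ≤ s := by nlinarith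
  have hpb : 11 * (h * s) < p := by nlinarith
  obtain ⟨X, hX⟩ : ∃ X, X = Nat.sqrt (11 * s) := ⟨_, rfl⟩
  have hX1 : X * X ≤ 11 * s := by rw [hX]; exact Nat.sqrt_le _
  have hX2 : 11 * s < (X + 1) * (X + 1) := by rw [hX]; exact Nat.lt_succ_sqrt _
  have hX100 : 100 ≤ X := by
    by_contra hcon
    have : X + 1 ≤ 100 := by omega
    have := Nat.mul_le_mul this this
    omega
  have hXX : 100 * X ≤ X * X := Nat.mul_le_mul_right _ hX100
  have hhXX : h * X * X ≤ 11 * (h * s) := by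
    calc h * X * X = h * (X * X) := by ring
      _ ≤ h * (11 * s) := Nat.mul_le_mul_left _ hX1
      _ = _ := by ring
  have h2hX : 2 * (h * X) < p := by
    have : 2 * (h * X) ≤ X * (h * X) := Nat.mul_le_mul_right _ (by omega)
    have e : X * (h * X) = h * X * X := by ring
    omega
  have hq2 : 2 * (h * X) < q₂ := by
    by_contra hcon
    push Not at hcon
    have h1 : q₁ * q₂ ≤ (2 * (h * X)) * (2 * (h * X)) := Nat.mul_le_mul (by omega) hcon
    have h2 : 0 < h ^ 2 * s := Nat.mul_pos (by positivity) (by omega)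
    have h3 : (2 * (h * X)) * (2 * (h * X)) = 4 * (h ^ 2 * (X * X)) := by ring
    have h4 : 46 * h ^ 2 * s = 46 * (h ^ 2 * s) := by ring
    have h5 : h ^ 2 * (X * X) ≤ h ^ 2 * (11 * s) := Nat.mul_le_mul_left _ hX1
    have h6 : h ^ 2 * (11 * s) = 11 * (h ^ 2 * s) := by ring
    omega
  have hXhX : X ≤ h * X := Nat.le_mul_of_pos_left _ (by omega)
  have hinj : Set.InjOn (fun n : ℕ => (n : ZMod p)) (Set.Iio p) := by
    intro a ha b hb hab
    have := (ZMod.natCast_eq_natCast_iff' a b p).mp hab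
    rwa [Nat.mod_eq_of_lt ha, Nat.mod_eq_of_lt hb] at this
  have hcount := good_pairs X (h * X) q₁ h (by omega)
  set G := ((Finset.Ioc 0 X) ×ˢ (Finset.Ioc 0 (h * X))).filter
    (fun t => Nat.Coprime t.1 t.2 ∧ ¬ q₁ ∣ t.1 ∧ ∀ i < h, ¬ q₁ ∣ t.2 + t.1 * i) with hG
  have hGm : ∀ t ∈ G, (0 < t.1 ∧ t.1 ≤ X) ∧ (0 < t.2 ∧ t.2 ≤ h * X) ∧ Nat.Coprime t.1 t.2 ∧
      ¬ q₁ ∣ t.1 ∧ ∀ i < h, ¬ q₁ ∣ t.2 + t.1 * i := by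
    intro t ht
    simp only [hG, Finset.mem_filter, Finset.mem_product, Finset.mem_Ioc] at ht
    exact ⟨ht.1.1, ht.1.2, ht.2⟩
  have hb0 : ∀ t ∈ G, ((t.1 : ℕ) : ZMod p) ≠ 0 := by
    intro t ht h0
    have h1 := hGm t ht
    have : t.1 = 0 := hinj (show t.1 < p by omega) (show 0 < p by omega) (by simpa using h0)
    omega
  have hβ : Function.Injective (fun i : Fin h => ((i : ℕ) : ZMod p)) := by
    intro i j hij
    have hhp : h < p := by nlinarith
    exact Fin.ext (hinj (show (i : ℕ) < p by omega) (show (j : ℕ) < p by omega) hij)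
  have hfin := hup _ hβ (G.image (fun t => ((t.2 : ℕ) : ZMod p) / ((t.1 : ℕ) : ZMod p))) ?_
  · rw [Finset.card_image_of_injOn] at hfin
    · have hqR : ((h : ℝ) + 1) / q₁ ≤ 5 / 29 := by
        have h1 : (6 : ℝ) * h ≤ q₁ := by exact_mod_cast hq
        have h2 : (29 : ℝ) ≤ h := by exact_mod_cast hh
        rw [div_le_div_iff₀ (by linarith) (by norm_num)]
        linarith
      have hfR : (5 : ℝ) * G.card < 16 * h * s := by exact_mod_cast hfin
      have x1 : (X : ℝ) * X ≤ 11 * s := by exact_mod_cast hX1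
      have x2 : (11 : ℝ) * s < (X + 1) * (X + 1) := by exact_mod_cast hX2
      have x3 : (100 : ℝ) ≤ X := by exact_mod_cast hX100
      have h2 : (29 : ℝ) ≤ h := by exact_mod_cast hh
      have y1 : (X : ℝ) * (h * X) * (1 / 2 - 5 / 29) - X * h ≤ G.card := by
        refine le_trans ?_ hcount
        push_cast
        have : (X : ℝ) * (h * X) * (1 / 2 - 5 / 29) ≤ X * (h * X) * (1 / 2 - (h + 1) / q₁) := by
          apply mul_le_mul_of_nonneg_left _ (by positivity)
          linarith
        linarith
      have y2 : (16 : ℝ) * s ≤ 5 * (X * X * (19 / 58) - X) := by nlinarith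
      have y3 := mul_le_mul_of_nonneg_left y2 (show (0 : ℝ) ≤ h by linarith)
      nlinarith
    · rintro ⟨b, n⟩ ht ⟨b', n'⟩ ht' heq
      have h1 := hGm _ ht
      have h1' := hGm _ ht'
      have h0 := hb0 _ ht
      have h0' := hb0 _ ht'
      simp only at heq h1 h1' h0 h0'
      rw [div_eq_div_iff h0 h0', ← Nat.cast_mul, ← Nat.cast_mul] at heq
      have c1 : n * b' ≤ h * X * X := Nat.mul_le_mul h1.2.1.2 h1'.1.2
      have c2 : n' * b ≤ h * X * X := Nat.mul_le_mul h1'.2.1.2 h1.1.2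
      have hnat : n * b' = n' * b := hinj (show n * b' < p by omega) (show n' * b < p by omega) heq
      have d1 : b ∣ b' := h1.2.2.1.dvd_of_dvd_mul_left (hnat ▸ Dvd.intro_left _ rfl)
      have d2 : b' ∣ b := h1'.2.2.1.dvd_of_dvd_mul_left (hnat ▸ Dvd.intro_left _ rfl)
      have hbb := Nat.dvd_antisymm d1 d2
      subst hbb
      have := Nat.eq_of_mul_eq_mul_right h1.1.1 hnat
      rw [this]
  · intro a ha i
    obtain ⟨⟨b, n⟩, ht, rfl⟩ := Finset.mem_image.mp ha
    have h1 := hGm _ ht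
    have h0 := hb0 _ ht
    simp only at h1 h0 ⊢
    have hχb : χ (b : ZMod p) = 1 := hone b h1.1.1 (by omega) (by omega) h1.2.2.2.1
    have hbi : b * ((i : ℕ) + 1) ≤ X * h := Nat.mul_le_mul h1.1.2 i.2
    have hexp : b * ((i : ℕ) + 1) = b * i + b := by ring
    have hcm : X * h = h * X := by ring
    have hχn : χ ((n + b * (i : ℕ) : ℕ) : ZMod p) = 1 :=
      hone _ (by omega) (by omega) (by omega) (h1.2.2.2.2 i i.2)
    have hmul : ((n : ZMod p) / b + ((i : ℕ) : ZMod p)) * b = ((n + b * (i : ℕ) : ℕ) : ZMod p) := by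
      push_cast
      field_simp
    have := congrArg χ hmul
    rwa [map_mul, hχb, mul_one, hχn] at this

end chi

end QQ

theorem q1q2_bound_odd_order (p : ℕ) [Fact p.Prime] (hp : (10:ℕ)^18 ≤ p)
    (χ : DirichletCharacter ℂ p) (hχ : χ ≠ 1) (hodd : Odd (orderOf χ))
    (q₁ q₂ : ℕ) (hq₁ : q₁.Prime) (hq₂ : q₂.Prime) (hlt : q₁ < q₂)
    (hnr₁ : χ (q₁ : ZMod p) ∉ ({0, 1} : Set ℂ))
    (hnr₂ : χ (q₂ : ZMod p) ∉ ({0, 1} : Set ℂ))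
    (hmin₁ : ∀ q : ℕ, q.Prime → χ (q : ZMod p) ∉ ({0, 1} : Set ℂ) → q₁ ≤ q)
    (hmin₂ : ∀ q : ℕ, q.Prime → χ (q : ZMod p) ∉ ({0, 1} : Set ℂ) → q ≠ q₁ → q₂ ≤ q) :
    (q₁ : ℝ) * (q₂ : ℝ) < 24 * (p : ℝ) ^ ((1:ℝ)/2) * (Real.log p) ^ 2 := by
  by_contra hcon
  push Not at hcon
  obtain ⟨h, hhdef⟩ : ∃ h, h = Nat.log 4 p := ⟨_, rfl⟩
  obtain ⟨s, hsdef⟩ : ∃ s, s = Nat.sqrt p := ⟨_, rfl⟩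
  have hp0 : p ≠ 0 := by omega
  have h4 : 4 ^ h ≤ p := by rw [hhdef]; exact Nat.pow_log_le_self 4 hp0
  have h4' : p < 4 ^ (h + 1) := by rw [hhdef]; exact Nat.lt_pow_succ_log_self (by norm_num) p
  have hh : 29 ≤ h := by
    rw [hhdef]
    exact Nat.le_log_of_pow_le (by norm_num) (le_trans (by norm_num) hp)
  have hpow : ∀ k : ℕ, 2 ^ k * 2 ^ k = 4 ^ k := fun k => by rw [← mul_pow]; norm_num
  have hs1 : 2 ^ h ≤ s := by rw [hsdef, Nat.le_sqrt, hpow]; exact h4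
  have hs2 : s < 2 ^ (h + 1) := by rw [hsdef, Nat.sqrt_lt, hpow]; exact h4'
  have hsp : s ^ 2 ≤ p := by rw [hsdef]; exact Nat.sqrt_le' p
  have hps : p < (s + 1) ^ 2 := by rw [hsdef]; exact Nat.lt_succ_sqrt' p
  have hsb : 100000 * h ^ 2 ≤ s := (QQ.two_pow_big h hh).trans hs1
  have hqq : 46 * h ^ 2 * s ≤ q₁ * q₂ := by
    have hL : 1.386 * (h : ℝ) ≤ Real.log p := by
      have e1 : Real.log ((4 : ℝ) ^ h) ≤ Real.log p := by
        apply Real.log_le_log (by positivity)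
        exact_mod_cast h4
      rw [Real.log_pow] at e1
      have e2 : Real.log 4 = 2 * Real.log 2 := by
        rw [show (4 : ℝ) = 2 ^ 2 by norm_num, Real.log_pow]; norm_num
      have e3 := Real.log_two_gt_d9
      have e4 : (1.386 : ℝ) ≤ Real.log 4 := by rw [e2]; linarith
      have := mul_le_mul_of_nonneg_left e4 (Nat.cast_nonneg (α := ℝ) h)
      linarith
    have hS : (s : ℝ) ≤ (p : ℝ) ^ ((1 : ℝ) / 2) := by
      rw [← Real.sqrt_eq_rpow]
      apply Real.le_sqrt_of_sq_le
      exact_mod_cast hsp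
    have hL2 : (1.386 * (h : ℝ)) ^ 2 ≤ (Real.log p) ^ 2 := by gcongr
    have : (46 : ℝ) * h ^ 2 * s ≤ q₁ * q₂ := by
      refine le_trans ?_ hcon
      calc (46 : ℝ) * h ^ 2 * s ≤ 24 * s * (1.386 * (h : ℝ)) ^ 2 := by
            have : (0 : ℝ) ≤ h ^ 2 * s := by positivity
            nlinarith
        _ ≤ _ := by gcongr
    exact_mod_cast this
  obtain ⟨m, hm2, hm3, hm⟩ := QQ.exists_m p χ hχ hodd
  have hup : ∀ (β : Fin h → ZMod p), Function.Injective β → ∀ A : Finset (ZMod p),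
      (∀ a ∈ A, ∀ i, χ (a + β i) = 1) → 5 * A.card < 16 * h * s :=
    fun β hβ A hA => QQ.upper h s m hh hs1 hs2 hsp hps hm2 hm3 β hβ A
      (fun a ha i => hm _ (hA a ha i))
  have hone := QQ.chi_one p χ q₁ q₂ hmin₂
  rcases lt_or_ge q₁ (6 * h) with hq | hq
  · exact QQ.caseI p χ q₁ q₂ h s hh hsb hsp hup hone hq₁.two_le hq hqq
  · exact QQ.caseII p χ q₁ q₂ h s hh hsb hsp hup hone hlt hq hqq
end
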